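/- arXiv:math/0111223 — 3 statements merged into one kernel-verified Lean document; each statement's English description precedes it below -/
import Mathlib

section
/- Let K be a locally finite simplicial complex of dimension k (a locally finite collection of simplices in some Euclidean space ℝ^N, closed under taking faces, with compatible intersections), and let |K| be its underlying polyhedron. Call a point p ∈ |K| a manifold point if it has a neighborhood in |K| homeomorphic to ℝ^k or to the closed half-space ℝ^{k-1} × [0,∞), and a non-manifold point otherwise. Then the set of non-manifold points of |K| is a union of closed simplices of K; equivalently, for every simplex σ of K, if the open simplex int(σ) contains a non-manifold point, then every point of the closed simplex σ is a non-manifold point, and in particular the set of non-manifold points is closed in |K| and is triangulated by a subcomplex of K. -/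
open Set Geometry

/-- `p` is a manifold point of a `k`-dimensional polyhedron `S ⊆ ℝ^N` if it has a
neighborhood in `S` homeomorphic to `ℝ^k` or to the closed half-space
`ℝ^(k-1) × [0,∞)`. -/
def IsManifoldPoint (k : ℕ) {N : ℕ} (S : Set (EuclideanSpace ℝ (Fin N)))
    (p : EuclideanSpace ℝ (Fin N)) : Prop :=
  ∃ V : Set (EuclideanSpace ℝ (Fin N)), IsOpen V ∧ p ∈ V ∧
    (Nonempty (((V ∩ S : Set (EuclideanSpace ℝ (Fin N)))) ≃ₜ EuclideanSpace ℝ (Fin k)) ∨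
     Nonempty (((V ∩ S : Set (EuclideanSpace ℝ (Fin N)))) ≃ₜ
        (EuclideanSpace ℝ (Fin (k - 1)) × (Set.Ici (0 : ℝ)))))

/-- Locally Euclidean model spaces. -/
def ModelSpace (k : ℕ) (X : Type) [TopologicalSpace X] : Prop :=
  Nonempty (X ≃ₜ EuclideanSpace ℝ (Fin k)) ∨
    Nonempty (X ≃ₜ (EuclideanSpace ℝ (Fin (k - 1)) × (Set.Ici (0 : ℝ))))

/-- `p` is a convex combination of the points of `s` with positive weights. -/
def PosPoint {N : ℕ} (s : Finset (EuclideanSpace ℝ (Fin N)))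
    (p : EuclideanSpace ℝ (Fin N)) : Prop :=
  ∃ w : EuclideanSpace ℝ (Fin N) → ℝ, (∀ i ∈ s, 0 < w i) ∧ ∑ i ∈ s, w i = 1 ∧
    ∑ i ∈ s, w i • i = p

/-- A ball in a normed space is homeomorphic to the whole space. -/
theorem ball_homeo {E : Type} [NormedAddCommGroup E] [NormedSpace ℝ E] (c : E) {r : ℝ}
    (hr : 0 < r) : Nonempty (Metric.ball c r ≃ₜ E) := by
  have e := (OpenPartialHomeomorph.univBall c r).toHomeomorphSourceTarget
  have e1 : (OpenPartialHomeomorph.univBall c r).source ≃ₜ E :=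
    (Homeomorph.setCongr (OpenPartialHomeomorph.univBall_source c r)).trans
      (Homeomorph.Set.univ E)
  have e2 := Homeomorph.setCongr (OpenPartialHomeomorph.univBall_target c hr)
  exact ⟨(e2.symm.trans e.symm).trans e1⟩

/-- Half-open intervals are homeomorphic to the half-line. -/
theorem halfInterval_homeo {a : ℝ} (ha : 0 < a) :
    Nonempty ({z : Set.Ici (0 : ℝ) | (z : ℝ) < a} ≃ₜ Set.Ici (0 : ℝ)) := by
  refine ⟨{ toFun := fun z => ⟨z.1.1 / (a - z.1.1), ?_⟩
            invFun := fun y => ⟨⟨a * y.1 / (1 + y.1), ?_⟩, ?_⟩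
            left_inv := ?_
            right_inv := ?_
            continuous_toFun := ?_
            continuous_invFun := ?_ }⟩
  · have h1 : (z.1.1 : ℝ) < a := z.2
    have h2 : (0 : ℝ) ≤ z.1.1 := z.1.2
    exact div_nonneg h2 (by linarith)
  · have h2 : (0 : ℝ) ≤ y.1 := y.2
    show (0 : ℝ) ≤ a * y.1 / (1 + y.1)
    positivity
  · have h2 : (0 : ℝ) ≤ y.1 := y.2
    show a * y.1 / (1 + y.1) < a
    rw [div_lt_iff₀ (by linarith)]
    nlinarith
  · rintro ⟨⟨z, h2⟩, h1⟩
    have h1 : z < a := h1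
    have h2 : 0 ≤ z := h2
    have h3 : a - z ≠ 0 := by linarith
    ext
    show a * (z / (a - z)) / (1 + z / (a - z)) = z
    have h4 : 1 + z / (a - z) = a / (a - z) := by field_simp; ring
    rw [h4]
    field_simp
  · rintro ⟨y, hy⟩
    have hy : 0 ≤ y := hy
    ext
    show (a * y / (1 + y)) / (a - a * y / (1 + y)) = y
    have h3 : 1 + y ≠ 0 := by linarith
    have h4 : a - a * y / (1 + y) = a / (1 + y) := by field_simp; ring
    rw [h4]
    field_simp
  · refine Continuous.subtype_mk ?_ _
    refine Continuous.div (by fun_prop) (by fun_prop) ?_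
    intro z
    have h1 : (z.1.1 : ℝ) < a := z.2
    linarith
  · refine Continuous.subtype_mk (Continuous.subtype_mk ?_ _) _
    refine Continuous.div (by fun_prop) (by fun_prop) ?_
    intro y
    have h2 : (0 : ℝ) ≤ y.1 := y.2
    linarith

/-- Interior intervals of the half-line are homeomorphic to the line. -/
theorem interval_homeo {t r : ℝ} (hr : 0 < r) (hrt : r ≤ t) :
    Nonempty ({z : Set.Ici (0 : ℝ) | (z : ℝ) ∈ Metric.ball t r} ≃ₜ ℝ) := by
  obtain ⟨e⟩ := ball_homeo t hr
  have h := (Topology.IsEmbedding.subtypeVal (p := fun x : ℝ => x ∈ Set.Ici (0 : ℝ))).homeomorphImage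
    {z : Set.Ici (0 : ℝ) | (z : ℝ) ∈ Metric.ball t r}
  refine ⟨(h.trans (Homeomorph.setCongr ?_)).trans e⟩
  ext x
  simp only [mem_image, mem_ofPred_eq]
  constructor
  · rintro ⟨y, hy, rfl⟩; exact hy
  · intro hx
    have h1 := hx
    rw [Metric.mem_ball, Real.dist_eq, abs_lt] at h1
    exact ⟨⟨x, by show 0 ≤ x; linarith⟩, hx, rfl⟩

theorem shrink_euclidean {k : ℕ} (x : EuclideanSpace ℝ (Fin k))
    (U : Set (EuclideanSpace ℝ (Fin k))) (hU : IsOpen U) (hx : x ∈ U) :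
    ∃ W ⊆ U, IsOpen W ∧ x ∈ W ∧ ModelSpace k W := by
  obtain ⟨r, hr, h⟩ := Metric.isOpen_iff.1 hU x hx
  exact ⟨_, h, Metric.isOpen_ball, Metric.mem_ball_self hr, Or.inl (ball_homeo x hr)⟩

theorem shrink_half {k : ℕ} (hk : 1 ≤ k)
    (x : EuclideanSpace ℝ (Fin (k - 1)) × (Set.Ici (0 : ℝ)))
    (U : Set (EuclideanSpace ℝ (Fin (k - 1)) × (Set.Ici (0 : ℝ)))) (hU : IsOpen U)
    (hx : x ∈ U) :
    ∃ W ⊆ U, IsOpen W ∧ x ∈ W ∧ ModelSpace k W := by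
  obtain ⟨r, hr, h⟩ := Metric.isOpen_iff.1 hU x hx
  obtain ⟨y, t⟩ := x
  obtain ⟨e⟩ := ball_homeo y hr
  rw [← ball_prod_same] at h
  rcases eq_or_lt_of_le (show (0 : ℝ) ≤ t.1 from t.2) with h0 | h0
  · obtain ⟨f⟩ := halfInterval_homeo hr
    refine ⟨Metric.ball y r ×ˢ {z : Set.Ici (0 : ℝ) | (z : ℝ) < r}, ?_, ?_, ?_, Or.inr ?_⟩
    · refine (prod_mono_right ?_).trans h
      intro z hz
      have h1 : (z : ℝ) < r := hz
      have h2 : (0 : ℝ) ≤ z := z.2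
      rw [Metric.mem_ball, Subtype.dist_eq, Real.dist_eq, ← h0, sub_zero, abs_of_nonneg h2]
      exact h1
    · exact Metric.isOpen_ball.prod (isOpen_lt continuous_subtype_val continuous_const)
    · exact ⟨Metric.mem_ball_self hr, by show (t : ℝ) < r; rw [← h0]; exact hr⟩
    · exact ⟨(Homeomorph.Set.prod _ _).trans (e.prodCongr f)⟩
  · have hm : 0 < min r t := lt_min hr h0
    obtain ⟨f⟩ := interval_homeo hm (min_le_right r t)
    refine ⟨Metric.ball y r ×ˢ {z : Set.Ici (0 : ℝ) | (z : ℝ) ∈ Metric.ball (t : ℝ) (min r t)},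
      ?_, ?_, ?_, Or.inl ?_⟩
    · refine (prod_mono_right ?_).trans h
      intro z hz
      have hz : (z : ℝ) ∈ Metric.ball (t : ℝ) (min r t) := hz
      exact Metric.ball_subset_ball (min_le_left _ _) hz
    · exact Metric.isOpen_ball.prod (Metric.isOpen_ball.preimage continuous_subtype_val)
    · exact ⟨Metric.mem_ball_self hr, Metric.mem_ball_self hm⟩
    · have g : (EuclideanSpace ℝ (Fin (k - 1)) × ℝ) ≃L[ℝ] EuclideanSpace ℝ (Fin k) :=
        ContinuousLinearEquiv.ofFinrankEq (by simp; omega)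
      exact ⟨((Homeomorph.Set.prod _ _).trans (e.prodCongr f)).trans g.toHomeomorph⟩

/-- Shrinking the neighborhood of a manifold point, abstract form. -/
theorem shrink_aux {N k : ℕ} {S V B : Set (EuclideanSpace ℝ (Fin N))}
    {p : EuclideanSpace ℝ (Fin N)} (hV : IsOpen V) (hpV : p ∈ V) (hpS : p ∈ S)
    (hB : IsOpen B) (hpB : p ∈ B) {X : Type} [TopologicalSpace X]
    (H : (V ∩ S : Set (EuclideanSpace ℝ (Fin N))) ≃ₜ X)
    (hX : ∀ (x : X) (U : Set X), IsOpen U → x ∈ U →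
      ∃ W ⊆ U, IsOpen W ∧ x ∈ W ∧ ModelSpace k W) :
    ∃ V' ⊆ B, IsOpen V' ∧ p ∈ V' ∧
      ModelSpace k (V' ∩ S : Set (EuclideanSpace ℝ (Fin N))) := by
  obtain ⟨W, hWU, hWo, hxW, hW⟩ := hX (H ⟨p, hpV, hpS⟩) {x | (H.symm x : EuclideanSpace ℝ (Fin N)) ∈ B}
    (hB.preimage (continuous_subtype_val.comp H.symm.continuous)) (by simpa using hpB)
  obtain ⟨O, hO, hOW⟩ := isOpen_induced_iff.1 (hWo.preimage H.continuous)
  have key : ∀ z (hz : z ∈ V ∩ S), z ∈ O ↔ H ⟨z, hz⟩ ∈ W := by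
    intro z hz
    have := Set.ext_iff.1 hOW ⟨z, hz⟩
    exact this
  have hemb : Topology.IsEmbedding (fun x : X => (H.symm x : EuclideanSpace ℝ (Fin N))) :=
    Topology.IsEmbedding.subtypeVal.comp H.symm.isEmbedding
  have e := hemb.homeomorphImage W
  have himg : (fun x : X => (H.symm x : EuclideanSpace ℝ (Fin N))) '' W = (O ∩ V ∩ B) ∩ S := by
    ext z
    constructor
    · rintro ⟨x, hx, rfl⟩
      refine ⟨⟨⟨(key _ (H.symm x).2).2 (by simpa using hx), (H.symm x).2.1⟩, hWU hx⟩,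
        (H.symm x).2.2⟩
    · rintro ⟨⟨⟨h1, h2⟩, h3⟩, h4⟩
      exact ⟨H ⟨z, h2, h4⟩, (key z ⟨h2, h4⟩).1 h1, by simp⟩
  have e' := (Homeomorph.setCongr himg).symm.trans e.symm
  refine ⟨O ∩ V ∩ B, inter_subset_right, (hO.inter hV).inter hB,
    ⟨⟨(key p ⟨hpV, hpS⟩).2 hxW, hpV⟩, hpB⟩, ?_⟩
  rcases hW with ⟨⟨f⟩⟩ | ⟨⟨f⟩⟩
  · exact Or.inl ⟨e'.trans f⟩
  · exact Or.inr ⟨e'.trans f⟩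

theorem shrink_manifold {N k : ℕ} (hk : 1 ≤ k) {S B : Set (EuclideanSpace ℝ (Fin N))}
    {p : EuclideanSpace ℝ (Fin N)} (hpS : p ∈ S) (hp : IsManifoldPoint k S p)
    (hB : IsOpen B) (hpB : p ∈ B) :
    ∃ V' ⊆ B, IsOpen V' ∧ p ∈ V' ∧
      ModelSpace k (V' ∩ S : Set (EuclideanSpace ℝ (Fin N))) := by
  obtain ⟨V, hV, hpV, ⟨⟨H⟩⟩ | ⟨⟨H⟩⟩⟩ := hp
  · exact shrink_aux hV hpV hpS hB hpB H shrink_euclidean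
  · exact shrink_aux hV hpV hpS hB hpB H (shrink_half hk)

/-- Transfer of manifold points along local translations. -/
theorem transfer {N k : ℕ} (hk : 1 ≤ k) {S : Set (EuclideanSpace ℝ (Fin N))}
    {p q : EuclideanSpace ℝ (Fin N)} (hpS : p ∈ S) (hp : IsManifoldPoint k S p)
    {ε : ℝ} (hε : 0 < ε) (h : ∀ v, ‖v‖ < ε → (p + v ∈ S ↔ q + v ∈ S)) :
    IsManifoldPoint k S q := by
  obtain ⟨V, hVB, hV, hpV, hM⟩ := shrink_manifold hk hpS hp Metric.isOpen_ball
    (Metric.mem_ball_self hε)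
  have e := (Homeomorph.addRight (q - p)).image (V ∩ S)
  have himg : (Homeomorph.addRight (q - p)) '' (V ∩ S) = ((fun x => x + (p - q)) ⁻¹' V) ∩ S := by
    ext z
    simp only [mem_image, Homeomorph.coe_addRight, mem_inter_iff, mem_preimage]
    constructor
    · rintro ⟨x, ⟨hx, hxS⟩, rfl⟩
      refine ⟨by rwa [show x + (q - p) + (p - q) = x by abel], ?_⟩
      have := (h (x - p) (by simpa [dist_eq_norm] using hVB hx)).1 (by simpa using hxS)
      convert this using 1
      abel
    · rintro ⟨hz, hzS⟩
      refine ⟨z + (p - q), ⟨hz, ?_⟩, by abel⟩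
      have := (h (z - q) (by
        have h2 := hVB hz
        rw [Metric.mem_ball, dist_eq_norm] at h2
        rwa [show z + (p - q) - p = z - q by abel] at h2)).2 (by simpa using hzS)
      convert this using 1
      abel
  have e' := e.trans (Homeomorph.setCongr himg)
  refine ⟨(fun x => x + (p - q)) ⁻¹' V, hV.preimage (by fun_prop), by simpa using hpV, ?_⟩
  rcases hM with ⟨⟨f⟩⟩ | ⟨⟨f⟩⟩
  · exact Or.inl ⟨e'.symm.trans f⟩
  · exact Or.inr ⟨e'.symm.trans f⟩

/-- Barycentric coordinates extend to continuous affine functions. -/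
theorem exists_coord {N : ℕ} {s : Finset (EuclideanSpace ℝ (Fin N))}
    (hs : AffineIndependent ℝ ((↑) : s → EuclideanSpace ℝ (Fin N)))
    {i : EuclideanSpace ℝ (Fin N)} (hi : i ∈ s) :
    ∃ f : EuclideanSpace ℝ (Fin N) →ᵃ[ℝ] ℝ, f i = 1 ∧ ∀ j ∈ s, j ≠ i → f j = 0 := by
  obtain ⟨t, hst, hti, htop⟩ := exists_subset_affineIndependent_affineSpan_eq_top
    (s := (s : Set (EuclideanSpace ℝ (Fin N)))) hs
  let b : AffineBasis t ℝ (EuclideanSpace ℝ (Fin N)) := ⟨(↑), hti, by simpa using htop⟩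
  refine ⟨b.coord ⟨i, hst hi⟩, b.coord_apply_eq ⟨i, hst hi⟩, ?_⟩
  intro j hj hji
  exact b.coord_apply_ne (i := ⟨i, hst hi⟩) (j := ⟨j, hst hj⟩)
    (fun hh => hji (congrArg Subtype.val hh).symm)

theorem affine_sum {N : ℕ} (f : EuclideanSpace ℝ (Fin N) →ᵃ[ℝ] ℝ)
    (s : Finset (EuclideanSpace ℝ (Fin N))) (w : EuclideanSpace ℝ (Fin N) → ℝ)
    (hw : ∑ i ∈ s, w i = 1) : f (∑ i ∈ s, w i • i) = ∑ i ∈ s, w i * f i := by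
  have h := Finset.map_affineCombination s (id : EuclideanSpace ℝ (Fin N) → _) w hw f
  rw [Finset.affineCombination_eq_linear_combination _ _ _ hw,
    Finset.affineCombination_eq_linear_combination _ _ _ hw] at h
  simpa using h

theorem coord_sum {N : ℕ} {f : EuclideanSpace ℝ (Fin N) →ᵃ[ℝ] ℝ}
    {s : Finset (EuclideanSpace ℝ (Fin N))} {w : EuclideanSpace ℝ (Fin N) → ℝ}
    (hw : ∑ i ∈ s, w i = 1) {i : EuclideanSpace ℝ (Fin N)} (hi : i ∈ s) (h1 : f i = 1)
    (h0 : ∀ j ∈ s, j ≠ i → f j = 0) : f (∑ i ∈ s, w i • i) = w i := by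
  rw [affine_sum f s w hw, Finset.sum_eq_single i]
  · simp [h1]
  · intro j hj hji; simp [h0 j hj hji]
  · intro h; exact absurd hi h

theorem PosPoint.mem {N : ℕ} {s : Finset (EuclideanSpace ℝ (Fin N))}
    {p : EuclideanSpace ℝ (Fin N)} (hp : PosPoint s p) :
    p ∈ convexHull ℝ (s : Set (EuclideanSpace ℝ (Fin N))) := by
  obtain ⟨w, h1, h2, h3⟩ := hp
  exact Finset.mem_convexHull'.2 ⟨w, fun i hi => (h1 i hi).le, h2, h3⟩

theorem PosPoint.subset {N : ℕ} {K : SimplicialComplex ℝ (EuclideanSpace ℝ (Fin N))}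
    {s t : Finset (EuclideanSpace ℝ (Fin N))} (hs : s ∈ K.faces) (ht : t ∈ K.faces)
    {p : EuclideanSpace ℝ (Fin N)} (hp : PosPoint s p)
    (hpt : p ∈ convexHull ℝ (t : Set (EuclideanSpace ℝ (Fin N)))) : s ⊆ t := by
  classical
  intro i hi
  by_contra hit
  have hps := hp.mem
  obtain ⟨a, ha, ha1, hap⟩ := hp
  obtain ⟨f, h1, h0⟩ := exists_coord (K.indep hs) hi
  have hf : f p = a i := by rw [← hap]; exact coord_sum ha1 hi h1 h0
  have hmem := K.inter_subset_convexHull hs ht ⟨hps, hpt⟩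
  rw [← Finset.coe_inter] at hmem
  obtain ⟨w, _, hw1, hwp⟩ := Finset.mem_convexHull'.1 hmem
  rw [← hwp, affine_sum f _ w hw1, Finset.sum_eq_zero] at hf
  · exact absurd hf (ha i hi).ne
  · intro j hj
    rw [Finset.mem_inter] at hj
    rw [h0 j hj.1 (fun h => hit (h ▸ hj.2)), mul_zero]

/-- Inside one simplex containing `s`, near `p`, the translate stays inside. -/
theorem local_simplex {N : ℕ} {s t : Finset (EuclideanSpace ℝ (Fin N))} (hst : s ⊆ t)
    (ht : AffineIndependent ℝ ((↑) : t → EuclideanSpace ℝ (Fin N)))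
    {p q : EuclideanSpace ℝ (Fin N)} (hp : PosPoint s p) (hq : PosPoint s q) :
    ∀ᶠ v in nhds (0 : EuclideanSpace ℝ (Fin N)),
      p + v ∈ convexHull ℝ (t : Set (EuclideanSpace ℝ (Fin N))) →
      q + v ∈ convexHull ℝ (t : Set (EuclideanSpace ℝ (Fin N))) := by
  classical
  obtain ⟨a, ha, ha1, hap⟩ := hp
  obtain ⟨c, hc, hc1, hcq⟩ := hq
  have hev : ∀ᶠ v in nhds (0 : EuclideanSpace ℝ (Fin N)), ∀ i ∈ s,
      ∀ w : EuclideanSpace ℝ (Fin N) → ℝ, ∑ i ∈ t, w i = 1 → ∑ i ∈ t, w i • i = p + v →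
      0 ≤ w i - a i + c i := by
    rw [Filter.eventually_all_finset]
    intro i hi
    obtain ⟨f, h1, h0⟩ := exists_coord ht (hst hi)
    have hfp : f p = a i := by
      rw [← hap]; exact coord_sum ha1 hi h1 (fun j hj => h0 j (hst hj))
    have hfc : Continuous f := f.continuous_of_finiteDimensional
    have hcont : Continuous (fun v => f (p + v)) := hfc.comp (by fun_prop)
    have : ∀ᶠ v in nhds (0 : EuclideanSpace ℝ (Fin N)), a i - c i < f (p + v) := by
      refine hcont.continuousAt.eventually_const_lt ?_
      show a i - c i < f (p + 0)
      rw [add_zero, hfp]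
      linarith [hc i hi]
    filter_upwards [this] with v hv w hw1 hwp
    rw [← hwp, coord_sum hw1 (hst hi) h1 h0] at hv
    linarith
  filter_upwards [hev] with v hv hmem
  obtain ⟨w, hw0, hw1, hwp⟩ := Finset.mem_convexHull'.1 hmem
  have ext1 : ∀ b : EuclideanSpace ℝ (Fin N) → ℝ,
      ∑ i ∈ t, (if i ∈ s then b i else 0) = ∑ i ∈ s, b i := by
    intro b
    rw [← Finset.sum_filter, Finset.filter_mem_eq_inter, Finset.inter_eq_right.2 hst]
  have ext2 : ∀ b : EuclideanSpace ℝ (Fin N) → ℝ,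
      ∑ i ∈ t, (if i ∈ s then b i else 0) • i = ∑ i ∈ s, b i • i := by
    intro b
    simp only [ite_smul, zero_smul]
    rw [← Finset.sum_filter, Finset.filter_mem_eq_inter, Finset.inter_eq_right.2 hst]
  refine Finset.mem_convexHull'.2
    ⟨fun i => w i - (if i ∈ s then a i else 0) + (if i ∈ s then c i else 0), ?_, ?_, ?_⟩
  · intro i hi
    by_cases his : i ∈ s
    · simpa [his] using hv i his w hw1 hwp
    · simpa [his] using hw0 i hi
  · rw [Finset.sum_add_distrib, Finset.sum_sub_distrib, ext1, ext1, hw1, ha1, hc1]; ring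
  · simp only [add_smul, sub_smul]
    rw [Finset.sum_add_distrib, Finset.sum_sub_distrib, ext2, ext2, hwp, hap, hcq]; abel

theorem local_half {N : ℕ} (K : SimplicialComplex ℝ (EuclideanSpace ℝ (Fin N)))
    (hlf : ∀ p ∈ K.space, ∃ V : Set (EuclideanSpace ℝ (Fin N)), IsOpen V ∧ p ∈ V ∧
      {s | s ∈ K.faces ∧ (V ∩ convexHull ℝ (s : Set (EuclideanSpace ℝ (Fin N)))).Nonempty}.Finite)
    {s : Finset (EuclideanSpace ℝ (Fin N))} (hs : s ∈ K.faces)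
    {p q : EuclideanSpace ℝ (Fin N)} (hp : PosPoint s p) (hq : PosPoint s q) :
    ∀ᶠ v in nhds (0 : EuclideanSpace ℝ (Fin N)), p + v ∈ K.space → q + v ∈ K.space := by
  obtain ⟨V, hV, hpV, hfin⟩ := hlf p (K.mem_space_iff.2 ⟨s, hs, hp.mem⟩)
  have hc : Filter.Tendsto (fun v : EuclideanSpace ℝ (Fin N) => p + v) (nhds 0) (nhds p) := by
    have : Continuous (fun v : EuclideanSpace ℝ (Fin N) => p + v) := by fun_prop
    simpa using this.tendsto 0
  have h1 := hc.eventually (hV.mem_nhds hpV)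
  have h2 : ∀ᶠ v in nhds (0 : EuclideanSpace ℝ (Fin N)), ∀ t ∈ {s | s ∈ K.faces ∧
      (V ∩ convexHull ℝ (s : Set (EuclideanSpace ℝ (Fin N)))).Nonempty},
      p + v ∈ convexHull ℝ (t : Set (EuclideanSpace ℝ (Fin N))) →
      q + v ∈ convexHull ℝ (t : Set (EuclideanSpace ℝ (Fin N))) := by
    rw [Filter.eventually_all_finite hfin]
    rintro t ⟨ht, -⟩
    by_cases hpt : p ∈ convexHull ℝ (t : Set (EuclideanSpace ℝ (Fin N)))
    · exact local_simplex (hp.subset hs ht hpt) (K.indep ht) hp hq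
    · have hcl : IsClosed (convexHull ℝ (t : Set (EuclideanSpace ℝ (Fin N)))) :=
        (t.finite_toSet.isCompact_convexHull ℝ).isClosed
      filter_upwards [hc.eventually (hcl.isOpen_compl.mem_nhds hpt)] with v hv hv'
      exact absurd hv' hv
  filter_upwards [h1, h2] with v hv1 hv2 hmem
  obtain ⟨t, ht, hvt⟩ := K.mem_space_iff.1 hmem
  exact K.mem_space_iff.2 ⟨t, ht, hv2 t ⟨ht, _, hv1, hvt⟩ hvt⟩

theorem manifold_of_pos {N k : ℕ} (K : SimplicialComplex ℝ (EuclideanSpace ℝ (Fin N)))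
    (hlf : ∀ p ∈ K.space, ∃ V : Set (EuclideanSpace ℝ (Fin N)), IsOpen V ∧ p ∈ V ∧
      {s | s ∈ K.faces ∧ (V ∩ convexHull ℝ (s : Set (EuclideanSpace ℝ (Fin N)))).Nonempty}.Finite)
    (hdim : ∀ s ∈ K.faces, s.card ≤ k + 1)
    {s : Finset (EuclideanSpace ℝ (Fin N))} (hs : s ∈ K.faces)
    {p q : EuclideanSpace ℝ (Fin N)} (hp : PosPoint s p) (hq : PosPoint s q)
    (hM : IsManifoldPoint k K.space p) : IsManifoldPoint k K.space q := by
  rcases Nat.eq_zero_or_pos k with hk | hk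
  · have hcard := hdim s hs
    have hle : s.card ≤ 1 := by omega
    have hpq : p = q := by
      have h1 := hp.mem
      have h2 := hq.mem
      obtain ⟨x, hx⟩ := Finset.card_le_one_iff_subset_singleton.1 hle
      have hsub : convexHull ℝ (s : Set (EuclideanSpace ℝ (Fin N))) ⊆ {x} := by
        refine (convexHull_mono (t := {x}) ?_).trans (by simp)
        exact_mod_cast hx
      rw [hsub h1, hsub h2]
    exact hpq ▸ hM
  · have h := (local_half K hlf hs hp hq).and (local_half K hlf hs hq hp)
    obtain ⟨ε, hε, hb⟩ := Metric.eventually_nhds_iff.1 h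
    refine transfer hk (K.mem_space_iff.2 ⟨s, hs, hp.mem⟩) hM hε (fun v hv => ?_)
    have := hb (y := v) (by simpa using hv)
    exact ⟨this.1, this.2⟩

/-- Positive points are dense in a simplex. -/
theorem exists_pos_near {N : ℕ} {s : Finset (EuclideanSpace ℝ (Fin N))}
    (hs : s.Nonempty) {q : EuclideanSpace ℝ (Fin N)}
    (hq : q ∈ convexHull ℝ (s : Set (EuclideanSpace ℝ (Fin N))))
    {V : Set (EuclideanSpace ℝ (Fin N))} (hV : IsOpen V) (hqV : q ∈ V) :
    ∃ p ∈ V, PosPoint s p := by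
  obtain ⟨w, hw0, hw1, hwq⟩ := Finset.mem_convexHull'.1 hq
  have hn : (0 : ℝ) < s.card := by exact_mod_cast hs.card_pos
  let g : EuclideanSpace ℝ (Fin N) := ∑ i ∈ s, (s.card : ℝ)⁻¹ • i
  have hc : Continuous (fun d : ℝ => (1 - d) • q + d • g) := by fun_prop
  have h1 : ∀ᶠ d in nhds (0 : ℝ), (1 - d) • q + d • g ∈ V := by
    have := hc.tendsto 0
    simp only [sub_zero, one_smul, zero_smul, add_zero] at this
    exact this.eventually (hV.mem_nhds hqV)
  obtain ⟨ε, hε, hb⟩ := Metric.eventually_nhds_iff.1 h1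
  let d := min (ε / 2) 1
  have hd0 : 0 < d := lt_min (by linarith) one_pos
  have hd1 : d ≤ 1 := min_le_right _ _
  have hdε : d < ε := lt_of_le_of_lt (min_le_left _ _) (by linarith)
  refine ⟨_, hb (y := d) (by simpa [abs_of_pos hd0] using hdε),
    fun i => (1 - d) * w i + d * (s.card : ℝ)⁻¹, ?_, ?_, ?_⟩
  · intro i hi
    have := hw0 i hi
    have h2 : 0 ≤ (1 - d) * w i := mul_nonneg (by linarith) this
    have h3 : 0 < d * (s.card : ℝ)⁻¹ := by positivity
    show 0 < (1 - d) * w i + d * (s.card : ℝ)⁻¹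
    linarith
  · rw [Finset.sum_add_distrib, ← Finset.mul_sum, hw1, Finset.sum_const, nsmul_eq_mul]
    field_simp
    ring
  · simp only [add_smul, mul_smul]
    rw [Finset.sum_add_distrib, ← Finset.smul_sum, ← Finset.smul_sum, hwq]

theorem pos_of_intrinsicInterior {N : ℕ} {s : Finset (EuclideanSpace ℝ (Fin N))}
    (hs : s.Nonempty) {p : EuclideanSpace ℝ (Fin N)}
    (hp : p ∈ intrinsicInterior ℝ (convexHull ℝ (s : Set (EuclideanSpace ℝ (Fin N))))) :
    PosPoint s p := by
  have hn : (0 : ℝ) < s.card := by exact_mod_cast hs.card_pos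
  let g : EuclideanSpace ℝ (Fin N) := ∑ i ∈ s, (s.card : ℝ)⁻¹ • i
  have hg : g ∈ convexHull ℝ (s : Set (EuclideanSpace ℝ (Fin N))) := by
    refine Finset.mem_convexHull'.2 ⟨fun _ => (s.card : ℝ)⁻¹, fun _ _ => by positivity, ?_, rfl⟩
    rw [Finset.sum_const, nsmul_eq_mul]
    field_simp
  obtain ⟨x, hx, rfl⟩ := mem_intrinsicInterior.1 hp
  have hmem : ∀ d : ℝ, AffineMap.lineMap (x : EuclideanSpace ℝ (Fin N)) g d ∈
      affineSpan ℝ (convexHull ℝ (s : Set (EuclideanSpace ℝ (Fin N)))) := fun d =>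
    AffineMap.lineMap_mem d x.2 (subset_affineSpan ℝ _ hg)
  have hc : Continuous (fun d : ℝ => (⟨AffineMap.lineMap (x : EuclideanSpace ℝ (Fin N)) g d,
      hmem d⟩ : affineSpan ℝ (convexHull ℝ (s : Set (EuclideanSpace ℝ (Fin N)))))) :=
    Continuous.subtype_mk AffineMap.lineMap_continuous _
  have hev := (hc.continuousAt (x := 0)).preimage_mem_nhds
    (isOpen_interior.mem_nhds (by simpa using hx))
  obtain ⟨ε, hε, hb⟩ := Metric.eventually_nhds_iff.1 hev
  have h2 := interior_subset (hb (y := -(ε / 2)) (by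
    rw [dist_zero_right, norm_neg, Real.norm_eq_abs, abs_of_pos (by linarith)]; linarith))
  have h3 : AffineMap.lineMap (x : EuclideanSpace ℝ (Fin N)) g (-(ε / 2)) ∈
      convexHull ℝ (s : Set (EuclideanSpace ℝ (Fin N))) := h2
  obtain ⟨u, hu0, hu1, hux⟩ := Finset.mem_convexHull'.1 h3
  rw [AffineMap.lineMap_apply_module] at hux
  set d := ε / 2 with hd
  have hd0 : 0 < d := by linarith
  have hd1 : 1 + d ≠ 0 := by linarith
  refine ⟨fun i => (1 + d)⁻¹ * (u i + d * (s.card : ℝ)⁻¹), ?_, ?_, ?_⟩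
  · intro i hi
    have h4 := hu0 i hi
    have : 0 < 1 + d := by linarith
    positivity
  · rw [← Finset.mul_sum, Finset.sum_add_distrib, hu1, Finset.sum_const, nsmul_eq_mul]
    field_simp
  · simp only [add_smul, mul_smul]
    rw [← Finset.smul_sum, Finset.sum_add_distrib, ← Finset.smul_sum, hux]
    change (1 + d)⁻¹ • (((1 - -d) • (x : EuclideanSpace ℝ (Fin N)) + (-d) • g) + d • g) = x
    rw [neg_smul, neg_add_cancel_right, sub_neg_eq_add, smul_smul, inv_mul_cancel₀ hd1, one_smul]

theorem exists_pos_face {N : ℕ} (K : SimplicialComplex ℝ (EuclideanSpace ℝ (Fin N)))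
    {p : EuclideanSpace ℝ (Fin N)} (hp : p ∈ K.space) : ∃ s ∈ K.faces, PosPoint s p := by
  classical
  obtain ⟨t, ht, hpt⟩ := K.mem_space_iff.1 hp
  obtain ⟨w, hw0, hw1, hwp⟩ := Finset.mem_convexHull'.1 hpt
  have h1 : ∑ i ∈ t.filter (fun i => 0 < w i), w i = 1 := by
    rw [← hw1]
    refine Finset.sum_subset (Finset.filter_subset _ _) ?_
    intro i hi hni
    have := hw0 i hi
    simp only [Finset.mem_filter, not_and, not_lt] at hni
    exact le_antisymm (hni hi) this
  refine ⟨t.filter (fun i => 0 < w i), K.down_closed ht (Finset.filter_subset _ _) ?_, w, ?_, h1, ?_⟩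
  · by_contra h
    rw [Finset.not_nonempty_iff_eq_empty] at h
    rw [h] at h1
    simp at h1
  · intro i hi
    exact (Finset.mem_filter.1 hi).2
  · rw [← hwp]
    refine Finset.sum_subset (Finset.filter_subset _ _) ?_
    intro i hi hni
    have := hw0 i hi
    simp only [Finset.mem_filter, not_and, not_lt] at hni
    rw [le_antisymm (hni hi) this, zero_smul]

/-- The non-manifold points of the polyhedron of a locally finite simplicial complex `K`
of dimension `k` form a union of closed simplices of `K`: if some point of an open simplex
of `K` is a non-manifold point, then every point of the corresponding closed simplex is a
non-manifold point; consequently the set of non-manifold points is closed in `|K|` and is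
triangulated by a subcomplex of `K`. -/
theorem nonManifoldPoints_subcomplex
    {N k : ℕ} (K : SimplicialComplex ℝ (EuclideanSpace ℝ (Fin N)))
    (hlf : ∀ p ∈ K.space, ∃ V : Set (EuclideanSpace ℝ (Fin N)), IsOpen V ∧ p ∈ V ∧
      {s | s ∈ K.faces ∧ (V ∩ convexHull ℝ (s : Set (EuclideanSpace ℝ (Fin N)))).Nonempty}.Finite)
    (hdim : ∀ s ∈ K.faces, s.card ≤ k + 1) :
    (∀ s ∈ K.faces,
      (∃ p ∈ intrinsicInterior ℝ (convexHull ℝ (s : Set (EuclideanSpace ℝ (Fin N)))),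
          ¬ IsManifoldPoint k K.space p) →
      ∀ q ∈ convexHull ℝ (s : Set (EuclideanSpace ℝ (Fin N))),
        ¬ IsManifoldPoint k K.space q) ∧
    (∃ C : Set (EuclideanSpace ℝ (Fin N)), IsClosed C ∧
      {p | p ∈ K.space ∧ ¬ IsManifoldPoint k K.space p} = C ∩ K.space) ∧
    (∃ F ⊆ K.faces,
      (∀ s ∈ F, ∀ t ∈ K.faces, t ⊆ s → t ∈ F) ∧
      {p | p ∈ K.space ∧ ¬ IsManifoldPoint k K.space p} =
        ⋃ s ∈ F, convexHull ℝ (s : Set (EuclideanSpace ℝ (Fin N)))) := by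
  have key : ∀ s ∈ K.faces, ∀ p, PosPoint s p → ¬ IsManifoldPoint k K.space p →
      ∀ q ∈ convexHull ℝ (s : Set (EuclideanSpace ℝ (Fin N))),
        ¬ IsManifoldPoint k K.space q := by
    intro s hs p hp hpn q hq hqm
    obtain ⟨V, hV, hqV, hM⟩ := hqm
    obtain ⟨p', hp'V, hp'⟩ := exists_pos_near (K.nonempty_of_mem_faces hs) hq hV hqV
    exact hpn (manifold_of_pos K hlf hdim hs hp' hp ⟨V, hV, hp'V, hM⟩)
  refine ⟨?_, ?_, ?_⟩
  · rintro s hs ⟨p, hp, hpn⟩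
    exact key s hs p (pos_of_intrinsicInterior (K.nonempty_of_mem_faces hs) hp) hpn
  · refine ⟨{p | IsManifoldPoint k K.space p}ᶜ, ?_, ?_⟩
    · rw [isClosed_compl_iff, isOpen_iff_forall_mem_open]
      rintro p ⟨V, hV, hpV, hM⟩
      exact ⟨V, fun x hx => ⟨V, hV, hx, hM⟩, hV, hpV⟩
    · ext p
      exact and_comm
  · refine ⟨{s | s ∈ K.faces ∧ ∀ q ∈ convexHull ℝ (s : Set (EuclideanSpace ℝ (Fin N))),
        ¬ IsManifoldPoint k K.space q}, fun s hs => hs.1, ?_, ?_⟩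
    · rintro s ⟨hs, hsn⟩ t ht hts
      exact ⟨ht, fun q hq => hsn q (convexHull_mono (by exact_mod_cast hts) hq)⟩
    · ext p
      simp only [mem_ofPred_eq, mem_iUnion, exists_prop]
      constructor
      · rintro ⟨hp, hpn⟩
        obtain ⟨s, hs, hps⟩ := exists_pos_face K hp
        exact ⟨s, ⟨hs, key s hs p hps hpn⟩, hps.mem⟩
      · rintro ⟨s, ⟨hs, hsn⟩, hps⟩
        exact ⟨K.mem_space_iff.2 ⟨s, hs, hps⟩, hsn p hps⟩
end

section
/- Let K be a finite simplicial complex of dimension k in some Euclidean space, and let S be a subset of the set of simplices of K that contains every simplex of dimension ≤ r, for some integer r ≥ 0. Let |K \ S| denote the union of the open simplices int(σ) over all simplices σ of K not belonging to S. Then |K \ S| is homotopy equivalent to a finite CW complex of dimension ≤ k − r − 1. -/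
open Set Geometry

namespace OC

/-- support of a weight function -/
noncomputable def supp {ι : Type*} [Fintype ι] (w : ι → ℝ) : Finset ι :=
  by classical exact Finset.univ.filter (fun i => w i ≠ 0)

lemma mem_supp {ι : Type*} [Fintype ι] {w : ι → ℝ} {i : ι} : i ∈ supp w ↔ w i ≠ 0 := by
  simp [supp]

/-- The weights (points of the standard simplex) whose support lies in `F`. -/
def Wt {ι : Type*} [Fintype ι] (F : Set (Finset ι)) : Set (ι → ℝ) :=
  {w | (∀ i, 0 ≤ w i) ∧ ∑ i, w i = 1 ∧ supp w ∈ F}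

lemma pos_of_mem {ι : Type*} [Fintype ι] {w : ι → ℝ} (h : ∀ i, 0 ≤ w i) {i : ι}
    (hi : i ∈ supp w) : 0 < w i := lt_of_le_of_ne (h i) (Ne.symm (mem_supp.1 hi))

lemma supp_nonempty {ι : Type*} [Fintype ι] {w : ι → ℝ} (h : ∑ i, w i = 1) :
    (supp w).Nonempty := by
  by_contra hne
  rw [Finset.not_nonempty_iff_eq_empty] at hne
  have : ∀ i, w i = 0 := fun i => by
    by_contra hi
    have := mem_supp.2 hi
    simp [hne] at this
  simp [this] at h

lemma homotopic_line {X E : Type*} [TopologicalSpace X] [AddCommGroup E] [Module ℝ E]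
    [TopologicalSpace E] [ContinuousAdd E] [ContinuousSMul ℝ E] {A : Set E}
    (f g : C(X, A))
    (h : ∀ x, ∀ t : ℝ, 0 ≤ t → t ≤ 1 → (1 - t) • (f x : E) + t • (g x : E) ∈ A) :
    f.Homotopic g := by
  refine ⟨⟨⟨fun q => ⟨(1 - (q.1 : ℝ)) • (f q.2 : E) + (q.1 : ℝ) • (g q.2 : E),
    h q.2 q.1 q.1.2.1 q.1.2.2⟩, ?_⟩, ?_, ?_⟩⟩
  · apply Continuous.subtype_mk
    fun_prop
  · intro x; ext; simp
  · intro x; ext; simp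

section Abs
variable {ι : Type*} [Fintype ι] (P : Set (Finset ι)) [Fintype P]

/-- The nonempty chains in a family of finsets. -/
def Chains : Set (Finset P) :=
  {c | c.Nonempty ∧ ∀ a ∈ c, ∀ b ∈ c, (a : Finset ι) ⊆ b ∨ (b : Finset ι) ⊆ a}

open Classical in
noncomputable def gmap (y : P → ℝ) : ι → ℝ :=
  fun v => ∑ σ : P, y σ * (if v ∈ (σ : Finset ι) then ((σ : Finset ι).card : ℝ)⁻¹ else 0)

open Classical in
noncomputable def cmap (w : ι → ℝ) (σ : Finset ι) : ℝ :=
  (∏ v ∈ σ, w v) * ∏ v ∈ σ, ∏ u ∈ σᶜ, max 0 (w v - w u)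

noncomputable def fmap (w : ι → ℝ) : P → ℝ :=
  fun σ => cmap w σ / ∑ τ : P, cmap w τ

variable {P}

lemma cmap_nonneg {w : ι → ℝ} (hw : ∀ i, 0 ≤ w i) (σ : Finset ι) : 0 ≤ cmap w σ := by
  unfold cmap
  refine mul_nonneg (Finset.prod_nonneg fun v _ => hw v)
    (Finset.prod_nonneg fun v _ => Finset.prod_nonneg fun u _ => le_max_left _ _)

lemma cmap_ne {w : ι → ℝ} {σ : Finset ι} (h : cmap w σ ≠ 0) :
    (∀ v ∈ σ, w v ≠ 0) ∧ ∀ v ∈ σ, ∀ u, u ∉ σ → w u < w v := by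
  classical
  unfold cmap at h
  rw [mul_ne_zero_iff, Finset.prod_ne_zero_iff, Finset.prod_ne_zero_iff] at h
  refine ⟨h.1, fun v hv u hu => ?_⟩
  have h2 := h.2 v hv
  rw [Finset.prod_ne_zero_iff] at h2
  have h3 := h2 u (by simpa using hu)
  by_contra hlt
  exact h3 (max_eq_left (by linarith))

lemma cmap_supp_pos {w : ι → ℝ} (hw : ∀ i, 0 ≤ w i) : 0 < cmap w (supp w) := by
  classical
  unfold cmap
  refine mul_pos (Finset.prod_pos fun v hv => pos_of_mem hw hv)
    (Finset.prod_pos fun v hv => Finset.prod_pos fun u hu => ?_)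
  have : w u = 0 := by
    by_contra h
    simp [mem_supp, h] at hu
  rw [this, sub_zero]
  exact lt_max_of_lt_right (pos_of_mem hw hv)

lemma cmap_continuous (σ : Finset ι) : Continuous fun w : ι → ℝ => cmap w σ := by
  classical
  unfold cmap
  fun_prop

lemma csum_pos {w : ι → ℝ} (hw : w ∈ Wt P) : 0 < ∑ τ : P, cmap w τ := by
  refine Finset.sum_pos' (fun τ _ => cmap_nonneg hw.1 _) ⟨⟨supp w, hw.2.2⟩, Finset.mem_univ _, ?_⟩
  exact cmap_supp_pos hw.1

lemma fmap_ne {w : ι → ℝ} {σ : P} (h : fmap P w σ ≠ 0) : cmap w σ ≠ 0 := by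
  intro h0; apply h; simp [fmap, h0]

lemma fmap_mem {w : ι → ℝ} (hw : w ∈ Wt P) : fmap P w ∈ Wt (Chains P) := by
  have hp := csum_pos hw
  have h1 : ∑ σ : P, fmap P w σ = 1 := by
    unfold fmap
    rw [← Finset.sum_div, div_self hp.ne']
  refine ⟨fun σ => div_nonneg (cmap_nonneg hw.1 _) hp.le, h1, supp_nonempty h1, ?_⟩
  intro a ha b hb
  have ha' := cmap_ne (fmap_ne (mem_supp.1 ha))
  have hb' := cmap_ne (fmap_ne (mem_supp.1 hb))
  by_contra hcon
  push Not at hcon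
  obtain ⟨v, hva, hvb⟩ := Finset.not_subset.1 hcon.1
  obtain ⟨u, hub, hua⟩ := Finset.not_subset.1 hcon.2
  have := ha'.2 v hva u hua
  have := hb'.2 u hub v hvb
  linarith

lemma gmap_nonneg {y : P → ℝ} (hy : ∀ i, 0 ≤ y i) (v : ι) : 0 ≤ gmap P y v := by
  unfold gmap
  refine Finset.sum_nonneg fun σ _ => mul_nonneg (hy _) ?_
  split_ifs <;> positivity

lemma gmap_ne_iff {y : P → ℝ} (hy : ∀ i, 0 ≤ y i) (v : ι) :
    gmap P y v ≠ 0 ↔ ∃ σ ∈ supp y, v ∈ (σ : Finset ι) := by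
  classical
  have hn : ∀ σ ∈ (Finset.univ : Finset P), 0 ≤ y σ * (if v ∈ (σ : Finset ι) then ((σ : Finset ι).card : ℝ)⁻¹ else 0) := by
    intro σ _
    refine mul_nonneg (hy _) ?_
    split_ifs <;> positivity
  unfold gmap
  rw [Ne, Finset.sum_eq_zero_iff_of_nonneg hn]
  push Not
  constructor
  · rintro ⟨σ, -, h⟩
    refine ⟨σ, mem_supp.2 (left_ne_zero_of_mul h), ?_⟩
    by_contra hv
    simp [hv] at h
  · rintro ⟨σ, h, hv⟩
    refine ⟨σ, Finset.mem_univ _, mul_ne_zero (mem_supp.1 h) ?_⟩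
    rw [if_pos hv]
    have := Finset.card_pos.2 ⟨v, hv⟩
    positivity

lemma exists_top {c : Finset P} (hc : c ∈ Chains P) : ∃ τ ∈ c, ∀ σ ∈ c, (σ : Finset ι) ⊆ τ := by
  obtain ⟨τ, hτ, hmax⟩ := Finset.exists_max_image c (fun σ => (σ : Finset ι).card) hc.1
  refine ⟨τ, hτ, fun σ hσ => ?_⟩
  rcases hc.2 σ hσ τ hτ with h | h
  · exact h
  · exact (Finset.eq_of_subset_of_card_le h (hmax σ hσ)).ge

lemma supp_gmap {y : P → ℝ} (hy : ∀ i, 0 ≤ y i) {τ : P} (hτ : τ ∈ supp y)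
    (h : ∀ σ ∈ supp y, (σ : Finset ι) ⊆ τ) : supp (gmap P y) = τ := by
  ext v
  rw [mem_supp, gmap_ne_iff hy]
  exact ⟨fun ⟨σ, h1, h2⟩ => h σ h1 h2, fun hv => ⟨τ, hτ, hv⟩⟩

lemma gmap_sum (h0 : ∅ ∉ P) {y : P → ℝ} (hy : ∑ i, y i = 1) : ∑ v, gmap P y v = 1 := by
  classical
  unfold gmap
  rw [Finset.sum_comm, ← hy]
  refine Finset.sum_congr rfl fun σ _ => ?_
  rw [← Finset.mul_sum, Finset.sum_ite_mem, Finset.univ_inter, Finset.sum_const, nsmul_eq_mul,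
    mul_inv_cancel₀, mul_one]
  have : (σ : Finset ι) ≠ ∅ := fun h => h0 (h ▸ σ.2)
  simpa using this

lemma gmap_mem (h0 : ∅ ∉ P) {y : P → ℝ} (hy : y ∈ Wt (Chains P)) : gmap P y ∈ Wt P := by
  obtain ⟨τ, hτ, h⟩ := exists_top hy.2.2
  refine ⟨gmap_nonneg hy.1, gmap_sum h0 hy.2.1, ?_⟩
  rw [supp_gmap hy.1 hτ h]
  exact τ.2

lemma supp_gf {w : ι → ℝ} (hw : w ∈ Wt P) : supp (gmap P (fmap P w)) = supp w := by
  have hf := fmap_mem hw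
  refine supp_gmap (τ := ⟨supp w, hw.2.2⟩) hf.1 ?_ ?_
  · rw [mem_supp]
    exact div_ne_zero (cmap_supp_pos hw.1).ne' (csum_pos hw).ne'
  · intro σ hσ v hv
    exact mem_supp.2 ((cmap_ne (fmap_ne (mem_supp.1 hσ))).1 v hv)

lemma gmap_mono {y : P → ℝ} (hy : y ∈ Wt (Chains P)) {σ : P} (hσ : σ ∈ supp y) {u v : ι}
    (hu : u ∈ (σ : Finset ι)) (hv : v ∉ (σ : Finset ι)) : gmap P y v ≤ gmap P y u := by
  classical
  unfold gmap
  refine Finset.sum_le_sum fun ρ _ => ?_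
  by_cases hρ : ρ ∈ supp y
  · refine mul_le_mul_of_nonneg_left ?_ (hy.1 _)
    rcases hy.2.2.2 σ hσ ρ hρ with h | h
    · rw [if_pos (h hu)]
      split_ifs <;> simp
    · rw [if_neg (fun hv' => hv (h hv'))]
      split_ifs <;> simp
  · have : y ρ = 0 := by
      by_contra h
      exact hρ (mem_supp.2 h)
    simp [this]

lemma fg_chain (h0 : ∅ ∉ P) {y : P → ℝ} (hy : y ∈ Wt (Chains P)) {a b : P}
    (ha : a ∈ supp y) (hb : b ∈ supp (fmap P (gmap P y))) :
    (a : Finset ι) ⊆ b ∨ (b : Finset ι) ⊆ a := by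
  have hb' := cmap_ne (fmap_ne (mem_supp.1 hb))
  by_contra hcon
  push Not at hcon
  obtain ⟨v, hva, hvb⟩ := Finset.not_subset.1 hcon.1
  obtain ⟨u, hub, hua⟩ := Finset.not_subset.1 hcon.2
  have := hb'.2 u hub v hvb
  have := gmap_mono hy ha hva hua
  linarith

lemma line_aux {κ : Type*} [Fintype κ] {w w' : κ → ℝ} (h : ∀ i, 0 ≤ w i) (h' : ∀ i, 0 ≤ w' i)
    (hs : ∑ i, w i = 1) (hs' : ∑ i, w' i = 1) {t : ℝ} (t0 : 0 ≤ t) (t1 : t ≤ 1) :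
    (∀ i, 0 ≤ ((1 - t) • w + t • w') i) ∧ ∑ i, ((1 - t) • w + t • w') i = 1 ∧
    ∀ i ∈ supp ((1 - t) • w + t • w'), i ∈ supp w ∨ i ∈ supp w' := by
  have h1t : 0 ≤ 1 - t := by linarith
  refine ⟨fun i => ?_, ?_, ?_⟩
  · exact add_nonneg (mul_nonneg h1t (h i)) (mul_nonneg t0 (h' i))
  · simp [Finset.sum_add_distrib, ← Finset.mul_sum, hs, hs']
  · intro i hi
    by_contra hcon
    push Not at hcon
    simp only [mem_supp, not_not] at hcon
    simp [mem_supp, hcon.1, hcon.2] at hi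

theorem abs_equiv (h0 : ∅ ∉ P) : Nonempty (ContinuousMap.HomotopyEquiv (Wt P) (Wt (Chains P))) := by
  let f : C(Wt P, Wt (Chains P)) := ⟨fun w => ⟨fmap P w, fmap_mem w.2⟩, by
    apply Continuous.subtype_mk
    refine continuous_pi fun σ => ?_
    unfold fmap
    refine Continuous.div ((cmap_continuous _).comp continuous_subtype_val)
      (continuous_finsetSum _ fun τ _ => (cmap_continuous _).comp continuous_subtype_val)
      fun w => (csum_pos w.2).ne'⟩
  let g : C(Wt (Chains P), Wt P) := ⟨fun y => ⟨gmap P y, gmap_mem h0 y.2⟩, by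
    apply Continuous.subtype_mk
    refine continuous_pi fun v => ?_
    unfold gmap
    exact continuous_finsetSum _ fun σ _ =>
      ((continuous_apply σ).comp continuous_subtype_val).mul continuous_const⟩
  refine ⟨⟨f, g, ?_, ?_⟩⟩
  · refine homotopic_line _ _ fun w t t0 t1 => ?_
    change (1 - t) • (gmap P (fmap P w)) + t • (w : ι → ℝ) ∈ Wt P
    have hg := gmap_mem h0 (fmap_mem w.2)
    have hl := line_aux hg.1 w.2.1 hg.2.1 w.2.2.1 t0 t1
    refine ⟨hl.1, hl.2.1, ?_⟩
    convert w.2.2.2 using 1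
    ext i
    constructor
    · intro hi
      rcases hl.2.2 i hi with h | h
      · rwa [supp_gf w.2] at h
      · exact h
    · intro hi
      have h1 := pos_of_mem w.2.1 hi
      rw [← supp_gf w.2] at hi
      have h2 := pos_of_mem hg.1 hi
      rw [mem_supp]
      refine ne_of_gt ?_
      change 0 < (1 - t) * gmap P (fmap P w) i + t * (w : ι → ℝ) i
      rcases eq_or_lt_of_le t0 with h | h
      · subst h; simpa using h2
      · have := mul_pos h h1
        have := mul_nonneg (sub_nonneg.2 t1) h2.le
        linarith
  · refine homotopic_line _ _ fun y t t0 t1 => ?_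
    change (1 - t) • (fmap P (gmap P y)) + t • (y : P → ℝ) ∈ Wt (Chains P)
    have hg := fmap_mem (gmap_mem h0 y.2)
    have hl := line_aux hg.1 y.2.1 hg.2.1 y.2.2.1 t0 t1
    refine ⟨hl.1, hl.2.1, supp_nonempty hl.2.1, ?_⟩
    intro a ha b hb
    rcases hl.2.2 a ha with ha | ha <;> rcases hl.2.2 b hb with hb | hb
    · exact hg.2.2.2 a ha b hb
    · exact (fg_chain h0 y.2 hb ha).symm
    · exact fg_chain h0 y.2 ha hb
    · exact y.2.2.2.2 a ha b hb

end Abs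

section Real
variable {ι : Type*} [Fintype ι] {E : Type*} [NormedAddCommGroup E] [NormedSpace ℝ E]

/-- realisation map -/
def real (p : ι → E) (w : ι → ℝ) : E := ∑ i, w i • p i

lemma real_continuous (p : ι → E) : Continuous (real p) := by
  unfold real; fun_prop

lemma isCompact_Wt {D : Set (Finset ι)} (hD : ∀ s ∈ D, ∀ t ⊆ s, t.Nonempty → t ∈ D) :
    IsCompact (Wt D) := by
  have : Wt D = ⋃ s ∈ D, (stdSimplex ℝ ι ∩ {w | ∀ i, i ∉ s → w i = 0}) := by
    ext w
    simp only [mem_iUnion, mem_inter_iff, Wt, stdSimplex, exists_prop]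
    constructor
    · rintro ⟨h1, h2, h3⟩
      exact ⟨_, h3, ⟨h1, h2⟩, fun i hi => by simpa [mem_supp] using hi⟩
    · rintro ⟨s, hs, ⟨h1, h2⟩, h3⟩
      refine ⟨h1, h2, hD s hs _ ?_ (supp_nonempty h2)⟩
      intro i hi
      by_contra h
      exact mem_supp.1 hi (h3 i h)
  rw [this]
  refine (Set.toFinite D).isCompact_biUnion fun s _ => ?_
  refine (isCompact_stdSimplex ℝ ι).inter_right ?_
  have : {w : ι → ℝ | ∀ i, i ∉ s → w i = 0} = ⋂ i, ⋂ (_ : i ∉ s), {w : ι → ℝ | w i = 0} := by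
    ext; simp
  rw [this]
  exact isClosed_iInter fun i => isClosed_iInter fun _ =>
    isClosed_eq (continuous_apply i) continuous_const

theorem real_homeo {p : ι → E} {D P : Set (Finset ι)}
    (hD : ∀ s ∈ D, ∀ t ⊆ s, t.Nonempty → t ∈ D) (hinj : InjOn (real p) (Wt D)) (hP : P ⊆ D) :
    Nonempty (Wt P ≃ₜ (real p '' Wt P : Set E)) := by
  have hsub : Wt P ⊆ Wt D := fun w hw => ⟨hw.1, hw.2.1, hP hw.2.2⟩
  have : CompactSpace (Wt D) := isCompact_iff_compactSpace.1 (isCompact_Wt hD)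
  have he : Topology.IsEmbedding (fun w : Wt D => real p w) :=
    (Continuous.isClosedEmbedding ((real_continuous p).comp continuous_subtype_val)
      (fun a b h => Subtype.ext (hinj a.2 b.2 h))).isEmbedding
  have he2 := he.comp (Topology.IsEmbedding.inclusion hsub)
  have hr : range ((fun w : Wt D => real p w) ∘ Set.inclusion hsub) = real p '' Wt P := by
    ext x
    simp
  exact ⟨he2.toHomeomorph.trans (Homeomorph.setCongr hr)⟩

end Real

section Geo
variable {E : Type*} [NormedAddCommGroup E] [NormedSpace ℝ E]

lemma uniq {s : Finset E} (hs : AffineIndependent ℝ ((↑) : s → E)) {a b : E → ℝ}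
    (h1 : ∑ v ∈ s, a v = ∑ v ∈ s, b v) (h2 : ∑ v ∈ s, a v • v = ∑ v ∈ s, b v • v) :
    ∀ v ∈ s, a v = b v := by
  rw [affineIndependent_iff] at hs
  have := hs Finset.univ (fun i => a i - b i) ?_ ?_
  · intro v hv
    have := this ⟨v, hv⟩ (Finset.mem_univ _)
    exact sub_eq_zero.1 this
  · rw [Finset.sum_coe_sort s (fun v => a v - b v), Finset.sum_sub_distrib, h1, sub_self]
  · simp only [sub_smul]
    rw [Finset.sum_coe_sort s (fun v => a v • v - b v • v), Finset.sum_sub_distrib, h2, sub_self]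

lemma mem_relint {C : Set E} {x : E} :
    x ∈ intrinsicInterior ℝ C ↔ x ∈ C ∧ ∀ᶠ y in nhdsWithin x (affineSpan ℝ C : Set E), y ∈ C := by
  constructor
  · intro hx
    refine ⟨intrinsicInterior_subset hx, ?_⟩
    rw [mem_intrinsicInterior] at hx
    obtain ⟨y, hy, rfl⟩ := hx
    rw [mem_interior_iff_mem_nhds] at hy
    rw [nhdsWithin_eq_map_subtype_coe y.2, Filter.eventually_map]
    exact hy
  · rintro ⟨hx, h⟩
    rw [mem_intrinsicInterior]
    refine ⟨⟨x, subset_affineSpan ℝ C hx⟩, ?_, rfl⟩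
    rw [mem_interior_iff_mem_nhds]
    rw [nhdsWithin_eq_map_subtype_coe (subset_affineSpan ℝ C hx), Filter.eventually_map] at h
    exact h

lemma relint_simplex [FiniteDimensional ℝ E] {s : Finset E}
    (hs : AffineIndependent ℝ ((↑) : s → E)) {x : E} :
    x ∈ intrinsicInterior ℝ (convexHull ℝ (s : Set E)) ↔
      ∃ w : E → ℝ, (∀ v ∈ s, 0 < w v) ∧ ∑ v ∈ s, w v = 1 ∧ ∑ v ∈ s, w v • v = x := by
  classical
  constructor
  · intro hx
    obtain ⟨hxC, hev⟩ := mem_relint.1 hx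
    obtain ⟨w, hw0, hw1, hwx⟩ := Finset.mem_convexHull'.1 hxC
    refine ⟨w, fun v hv => ?_, hw1, hwx⟩
    refine lt_of_le_of_ne (hw0 v hv) fun hzero => ?_
    -- move away from `v`
    have hxs := subset_affineSpan ℝ _ hxC
    have hvs := subset_affineSpan ℝ _ (subset_convexHull ℝ (s : Set E) hv)
    have hcont : Filter.Tendsto (fun ε : ℝ => ε • (x - v) + x) (nhdsWithin 0 (Ioi 0))
        (nhdsWithin x (affineSpan ℝ (convexHull ℝ (s : Set E)) : Set E)) := by
      refine tendsto_nhdsWithin_iff.2 ⟨?_, ?_⟩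
      · have : Continuous fun ε : ℝ => ε • (x - v) + x := by fun_prop
        have h := this.tendsto 0
        simp only [zero_smul, zero_add] at h
        exact h.mono_left nhdsWithin_le_nhds
      · exact Filter.Eventually.of_forall fun ε =>
          AffineSubspace.smul_vsub_vadd_mem _ ε hxs hvs hxs
    have h1 := (hcont.eventually hev).and self_mem_nhdsWithin
    obtain ⟨ε, hε, hε0⟩ := h1.exists
    have hε0 : 0 < ε := hε0
    obtain ⟨u, hu0, hu1, hux⟩ := Finset.mem_convexHull'.1 hε
    have := uniq hs (a := u) (b := fun z => (1 + ε) * w z - ε * (if z = v then 1 else 0))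
      (by
        rw [hu1, Finset.sum_sub_distrib, ← Finset.mul_sum, ← Finset.mul_sum, hw1,
          Finset.sum_ite_eq' s v, if_pos hv]
        ring)
      (by
        rw [hux]
        simp only [sub_smul, mul_smul, Finset.sum_sub_distrib, ← Finset.smul_sum, hwx, ite_smul,
          one_smul, zero_smul, Finset.sum_ite_eq' s v, if_pos hv]
        module) v hv
    have h3 := hu0 v hv
    rw [this, ← hzero] at h3
    simp at h3
    linarith
  · rintro ⟨w, hw0, hw1, hwx⟩
    have hxC : x ∈ convexHull ℝ (s : Set E) :=
      Finset.mem_convexHull'.2 ⟨w, fun v hv => (hw0 v hv).le, hw1, hwx⟩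
    obtain ⟨z, hz⟩ := Set.Nonempty.intrinsicInterior (convex_convexHull ℝ (s : Set E)) ⟨x, hxC⟩
    obtain ⟨hzC, hev⟩ := mem_relint.1 hz
    obtain ⟨u, hu0, hu1, huz⟩ := Finset.mem_convexHull'.1 hzC
    have hxs := subset_affineSpan ℝ _ hxC
    have hzs := subset_affineSpan ℝ _ hzC
    obtain ⟨ε, hε0, hε1, hεw⟩ : ∃ ε : ℝ, 0 < ε ∧ ε < 1 ∧ ∀ v ∈ s, ε ≤ w v := by
      have hne : s.Nonempty := by
        by_contra h
        rw [Finset.not_nonempty_iff_eq_empty] at h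
        simp [h] at hw1
      obtain ⟨m, hm, hmin⟩ := Finset.exists_min_image s w hne
      refine ⟨min (w m) (1/2), lt_min (hw0 m hm) (by norm_num),
        lt_of_le_of_lt (min_le_right _ _) (by norm_num), fun v hv =>
        (min_le_left _ _).trans (hmin v hv)⟩
    have hule : ∀ v ∈ s, u v ≤ 1 := fun v hv => hu1 ▸ Finset.single_le_sum hu0 hv
    have hq : (1 - ε)⁻¹ • (x - ε • z) ∈ convexHull ℝ (s : Set E) := by
      refine Finset.mem_convexHull'.2 ⟨fun v => (1 - ε)⁻¹ * (w v - ε * u v), ?_, ?_, ?_⟩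
      · intro v hv
        refine mul_nonneg (inv_nonneg.2 (by linarith)) ?_
        have := mul_le_mul_of_nonneg_left (hule v hv) hε0.le
        have := hεw v hv
        linarith
      · rw [← Finset.mul_sum, Finset.sum_sub_distrib, ← Finset.mul_sum, hw1, hu1, mul_one]
        exact inv_mul_cancel₀ (by linarith)
      · simp only [mul_smul, sub_smul, ← Finset.smul_sum, Finset.sum_sub_distrib, hwx, huz]
    refine mem_relint.2 ⟨hxC, ?_⟩
    have hcont : Filter.Tendsto (fun y : E => ε⁻¹ • (y - x) + z)
        (nhdsWithin x (affineSpan ℝ (convexHull ℝ (s : Set E)) : Set E))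
        (nhdsWithin z (affineSpan ℝ (convexHull ℝ (s : Set E)) : Set E)) := by
      refine tendsto_nhdsWithin_iff.2 ⟨?_, ?_⟩
      · have : Continuous fun y : E => ε⁻¹ • (y - x) + z := by fun_prop
        have h := this.tendsto x
        simp only [sub_self, smul_zero, zero_add] at h
        exact h.mono_left nhdsWithin_le_nhds
      · filter_upwards [self_mem_nhdsWithin] with y hy
        exact AffineSubspace.smul_vsub_vadd_mem _ ε⁻¹ hy hxs hzs
    filter_upwards [hcont.eventually hev] with y hy
    have := (convex_convexHull ℝ (s : Set E)) hq hy (show 0 ≤ 1 - ε by linarith) hε0.le (by ring)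
    convert this using 1
    have h1 : (1 - ε) ≠ 0 := by linarith
    rw [smul_smul, mul_inv_cancel₀ h1, smul_add, smul_smul, mul_inv_cancel₀ hε0.ne']
    module

open Classical in
/-- extension by zero -/
noncomputable def ext0 {V : Finset E} (w : V → ℝ) : E → ℝ :=
  fun v => if h : v ∈ V then w ⟨v, h⟩ else 0

/-- support as a finset of `E` -/
noncomputable def esupp {V : Finset E} (w : V → ℝ) : Finset E :=
  (supp w).map (Function.Embedding.subtype _)

lemma mem_esupp {V : Finset E} {w : V → ℝ} {v : E} : v ∈ esupp w ↔ ext0 w v ≠ 0 := by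
  simp only [esupp, Finset.mem_map, Function.Embedding.subtype_apply, mem_supp, ext0]
  constructor
  · rintro ⟨a, ha, rfl⟩
    simpa using ha
  · intro h
    split_ifs at h with h'
    · exact ⟨⟨v, h'⟩, h, rfl⟩
    · exact absurd rfl h

lemma ext0_sum {V : Finset E} (w : V → ℝ) : ∑ v ∈ esupp w, ext0 w v = ∑ i, w i := by
  have hsub : esupp w ⊆ V := by
    intro v hv
    obtain ⟨a, -, rfl⟩ := Finset.mem_map.1 hv
    exact a.2
  rw [Finset.sum_subset hsub (fun v _ hv => by simpa [mem_esupp] using hv), ← Finset.sum_coe_sort]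
  exact Finset.sum_congr rfl fun i _ => by simp [ext0]

lemma ext0_real {V : Finset E} (w : V → ℝ) :
    ∑ v ∈ esupp w, ext0 w v • v = real (Subtype.val : V → E) w := by
  have hsub : esupp w ⊆ V := by
    intro v hv
    obtain ⟨a, -, rfl⟩ := Finset.mem_map.1 hv
    exact a.2
  rw [Finset.sum_subset hsub (fun v _ hv => by
    have : ext0 w v = 0 := by simpa [mem_esupp] using hv
    rw [this, zero_smul]), ← Finset.sum_coe_sort]
  exact Finset.sum_congr rfl fun i _ => by simp [ext0]

lemma ext0_nonneg {V : Finset E} {w : V → ℝ} (h : ∀ i, 0 ≤ w i) (v : E) : 0 ≤ ext0 w v := by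
  unfold ext0
  split_ifs
  · exact h _
  · exact le_rfl

/-- abstract faces -/
def absF (V : Finset E) (F : Set (Finset E)) : Set (Finset V) :=
  {t | t.map (Function.Embedding.subtype _) ∈ F}

lemma real_injOn (K : SimplicialComplex ℝ E) (V : Finset E) :
    InjOn (real (Subtype.val : V → E)) (Wt (absF V K.faces)) := by
  classical
  intro w hw w' hw' hEq
  have hs : esupp w ∈ K.faces := hw.2.2
  have hs' : esupp w' ∈ K.faces := hw'.2.2
  have m1 : real (Subtype.val : V → E) w ∈ convexHull ℝ (esupp w : Set E) :=
    Finset.mem_convexHull'.2 ⟨ext0 w, fun v _ => ext0_nonneg hw.1 v, (ext0_sum w).trans hw.2.1,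
      ext0_real w⟩
  have m2 : real (Subtype.val : V → E) w ∈ convexHull ℝ (esupp w' : Set E) :=
    Finset.mem_convexHull'.2 ⟨ext0 w', fun v _ => ext0_nonneg hw'.1 v,
      (ext0_sum w').trans hw'.2.1, (ext0_real w').trans hEq.symm⟩
  have m3 := K.inter_subset_convexHull hs hs' ⟨m1, m2⟩
  rw [← Finset.coe_inter] at m3
  obtain ⟨u, -, hu1, hux⟩ := Finset.mem_convexHull'.1 m3
  have key : ∀ z : V → ℝ, esupp z ∈ K.faces → ∑ i, z i = 1 →
      real (Subtype.val : V → E) z = real (Subtype.val : V → E) w →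
      esupp w ∩ esupp w' ⊆ esupp z →
      ext0 z = fun v => if v ∈ esupp w ∩ esupp w' then u v else 0 := by
    intro z hz hz1 hzr hsub
    have := uniq (K.indep hz) (a := ext0 z)
      (b := fun v => if v ∈ esupp w ∩ esupp w' then u v else 0)
      (by rw [ext0_sum, hz1, Finset.sum_ite_mem, Finset.inter_eq_right.2 hsub, hu1])
      (by
        simp only [ite_smul, zero_smul]
        rw [ext0_real, hzr, Finset.sum_ite_mem, Finset.inter_eq_right.2 hsub, hux])
    funext v
    by_cases hv : v ∈ esupp z
    · exact this v hv
    · rw [if_neg (fun h => hv (hsub h))]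
      simpa [mem_esupp] using hv
  have e1 := key w hs hw.2.1 rfl Finset.inter_subset_left
  have e2 := key w' hs' hw'.2.1 hEq.symm Finset.inter_subset_right
  have e3 := e1.trans e2.symm
  funext i
  have := congrFun e3 i
  simpa [ext0] using this

lemma real_image [FiniteDimensional ℝ E] (K : SimplicialComplex ℝ E) (V : Finset E)
    (hV : ∀ s ∈ K.faces, s ⊆ V) (P : Set (Finset E)) (hP : P ⊆ K.faces) :
    real (Subtype.val : V → E) '' Wt (absF V P) =
      ⋃ s ∈ P, intrinsicInterior ℝ (convexHull ℝ (s : Set E)) := by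
  classical
  ext x
  simp only [mem_image, mem_iUnion, exists_prop]
  constructor
  · rintro ⟨w, hw, rfl⟩
    have hs : esupp w ∈ P := hw.2.2
    refine ⟨esupp w, hs, (relint_simplex (K.indep (hP hs))).2 ⟨ext0 w, fun v hv => ?_,
      (ext0_sum w).trans hw.2.1, ext0_real w⟩⟩
    exact lt_of_le_of_ne (ext0_nonneg hw.1 v) (Ne.symm (mem_esupp.1 hv))
  · rintro ⟨s, hs, hx⟩
    obtain ⟨w, hw0, hw1, hwx⟩ := (relint_simplex (K.indep (hP hs))).1 hx
    have hsV := hV s (hP hs)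
    refine ⟨fun i => if (i : E) ∈ s then w i else 0, ⟨fun i => ?_, ?_, ?_⟩, ?_⟩
    · dsimp only
      split_ifs with h
      · exact (hw0 _ h).le
      · exact le_rfl
    · rw [Finset.sum_coe_sort V (fun v => if v ∈ s then w v else 0), Finset.sum_ite_mem,
        Finset.inter_eq_right.2 hsV, hw1]
    · change Finset.map _ _ ∈ P
      convert hs using 1
      ext v
      simp only [Finset.mem_map, mem_supp, Function.Embedding.subtype_apply]
      constructor
      · rintro ⟨a, ha, rfl⟩
        by_contra h
        simp [h] at ha
      · intro h
        exact ⟨⟨v, hsV h⟩, by simpa [h] using (hw0 v h).ne', rfl⟩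
    · unfold real
      simp only [ite_smul, zero_smul]
      rw [Finset.sum_coe_sort V (fun v => if v ∈ s then w v • v else 0), Finset.sum_ite_mem,
        Finset.inter_eq_right.2 hsV, hwx]

end Geo

section Std
variable {Q : Type*} [Fintype Q]

/-- standard vertices -/
noncomputable def pt (i : Q) : EuclideanSpace ℝ (Fin (Fintype.card Q)) :=
  EuclideanSpace.single (Fintype.equivFin Q i) 1

lemma pt_linInd : LinearIndependent ℝ (pt : Q → _) := by
  have h := (EuclideanSpace.basisFun (Fin (Fintype.card Q)) ℝ).toBasis.linearIndependent
  have h2 := h.comp (Fintype.equivFin Q) (Fintype.equivFin Q).injective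
  have h3 : (pt : Q → _) =
      (EuclideanSpace.basisFun (Fin (Fintype.card Q)) ℝ).toBasis ∘ Fintype.equivFin Q := by
    funext i
    simp [pt]
  rw [h3]
  exact h2

lemma pt_real_inj : Function.Injective (real (pt : Q → _)) := by
  intro w w' h
  have := Fintype.linearIndependent_iff.1 (pt_linInd (Q := Q)) (fun i => w i - w' i) (by
    simp only [sub_smul, Finset.sum_sub_distrib]
    exact sub_eq_zero.2 h)
  funext i
  exact sub_eq_zero.1 (this i)

open Classical in
/-- The standard geometric realisation of an abstract complex. -/
noncomputable def stdCx (D : Set (Finset Q)) (hne : ∀ s ∈ D, s.Nonempty)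
    (hD : ∀ s ∈ D, ∀ t ⊆ s, t.Nonempty → t ∈ D) :
    SimplicialComplex ℝ (EuclideanSpace ℝ (Fin (Fintype.card Q))) :=
  SimplicialComplex.ofAffineIndependent
    ⟨(fun c : Finset Q => c.map ⟨pt, (pt_linInd (Q := Q)).injective⟩) '' D, by
      rintro _ ⟨c, hc, rfl⟩
      refine ⟨(hne c hc).map, ?_⟩
      intro b hb hbne
      obtain ⟨t, ht, rfl⟩ := Finset.subset_map_iff.1 hb
      exact ⟨t, hD c hc t ht (Finset.map_nonempty.1 hbne), rfl⟩⟩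
    (by
      refine (pt_linInd (Q := Q)).affineIndependent.range.mono fun x hx => ?_
      simp only [Set.mem_iUnion, Finset.mem_coe] at hx
      obtain ⟨_, ⟨c, _, rfl⟩, hx⟩ := hx
      obtain ⟨i, -, rfl⟩ := Finset.mem_map.1 hx
      exact ⟨i, rfl⟩)

lemma stdCx_faces (D : Set (Finset Q)) (hne : ∀ s ∈ D, s.Nonempty)
    (hD : ∀ s ∈ D, ∀ t ⊆ s, t.Nonempty → t ∈ D) :
    (stdCx D hne hD).faces =
      (fun c : Finset Q => c.map ⟨pt, (pt_linInd (Q := Q)).injective⟩) '' D := rfl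

lemma stdCx_space (D : Set (Finset Q)) (hne : ∀ s ∈ D, s.Nonempty)
    (hD : ∀ s ∈ D, ∀ t ⊆ s, t.Nonempty → t ∈ D) :
    (stdCx D hne hD).space = real pt '' Wt D := by
  classical
  ext x
  rw [SimplicialComplex.mem_space_iff, stdCx_faces]
  constructor
  · rintro ⟨_, ⟨c, hc, rfl⟩, hx⟩
    obtain ⟨w, hw0, hw1, hwx⟩ := Finset.mem_convexHull'.1 hx
    rw [Finset.sum_map] at hw1 hwx
    simp only [Function.Embedding.coeFn_mk] at hw1 hwx
    have hs : ∑ i : Q, (if i ∈ c then w (pt i) else 0) = 1 := by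
      rw [Finset.sum_ite_mem, Finset.univ_inter, hw1]
    refine ⟨fun i => if i ∈ c then w (pt i) else 0, ⟨fun i => ?_, hs, ?_⟩, ?_⟩
    · dsimp only
      split_ifs with h
      · exact hw0 _ (Finset.mem_map.2 ⟨i, h, rfl⟩)
      · exact le_rfl
    · refine hD c hc _ ?_ (supp_nonempty hs)
      intro i hi
      by_contra h
      simp [mem_supp, h] at hi
    · unfold real
      simp only [ite_smul, zero_smul]
      rw [Finset.sum_ite_mem, Finset.univ_inter, hwx]
  · rintro ⟨w, hw, rfl⟩
    refine ⟨_, ⟨supp w, hw.2.2, rfl⟩, ?_⟩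
    have h0 : ∀ i ∈ Finset.univ, i ∉ supp w → w i = 0 := fun i _ hi => by
      simpa [mem_supp] using hi
    have h1 : real pt w = ∑ i ∈ supp w, w i • pt i := by
      unfold real
      refine (Finset.sum_subset (Finset.subset_univ _) fun i a hi => ?_).symm
      rw [h0 i a hi, zero_smul]
    rw [h1]
    refine (convex_convexHull ℝ _).sum_mem (fun i _ => hw.1 i) ?_ fun i hi => ?_
    · rw [Finset.sum_subset (Finset.subset_univ _) h0, hw.2.1]
    · exact subset_convexHull ℝ _ (Finset.mem_coe.2 (Finset.mem_map.2 ⟨i, hi, rfl⟩))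

end Std
end OC

/-- Let `K` be a finite simplicial complex of dimension `k` and `S` a set of simplices
of `K` containing every simplex of dimension `≤ r`.  Then the union `|K \ S|` of the open
simplices of the simplices of `K` not in `S` is homotopy equivalent to a finite
(simplicial, hence CW) complex of dimension `≤ k - r - 1`. -/
theorem open_complement_of_skeleton_homotopy_type
    {N k r : ℕ} (K : SimplicialComplex ℝ (EuclideanSpace ℝ (Fin N)))
    (hfin : K.faces.Finite)
    (hdim : ∀ s ∈ K.faces, s.card ≤ k + 1)
    (S : Set (Finset (EuclideanSpace ℝ (Fin N))))
    (hS : ∀ s ∈ K.faces, s.card ≤ r + 1 → s ∈ S) :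
    ∃ (N' : ℕ) (L : SimplicialComplex ℝ (EuclideanSpace ℝ (Fin N'))),
      L.faces.Finite ∧
      (∀ t ∈ L.faces, (t.card : ℤ) ≤ (k : ℤ) - (r : ℤ)) ∧
      Nonempty (ContinuousMap.HomotopyEquiv
        (⋃ s ∈ K.faces \ S,
          intrinsicInterior ℝ (convexHull ℝ (s : Set (EuclideanSpace ℝ (Fin N)))) :
          Set (EuclideanSpace ℝ (Fin N)))
        L.space) := by
  classical
  let V : Finset (EuclideanSpace ℝ (Fin N)) := hfin.toFinset.biUnion id
  have hV : ∀ s ∈ K.faces, s ⊆ V := fun s hs =>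
    Finset.subset_biUnion_of_mem id (hfin.mem_toFinset.2 hs)
  let P : Set (Finset V) := OC.absF V (K.faces \ S)
  let hFP : Fintype P := Fintype.ofFinite P
  have hne : ∀ s ∈ OC.Chains P, s.Nonempty := fun s hs => hs.1
  have hD : ∀ s ∈ OC.Chains P, ∀ t ⊆ s, t.Nonempty → t ∈ OC.Chains P :=
    fun s hs t hts ht => ⟨ht, fun a ha b hb => hs.2 a (hts ha) b (hts hb)⟩
  have h0 : ∅ ∉ P := fun h => K.empty_notMem (by simpa using h.1)
  refine ⟨Fintype.card P, OC.stdCx (OC.Chains P) hne hD, ?_, ?_, ?_⟩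
  · rw [OC.stdCx_faces]
    exact (Set.toFinite _).image _
  · intro t ht
    rw [OC.stdCx_faces] at ht
    obtain ⟨c, hc, rfl⟩ := ht
    simp only [Finset.card_map]
    have hcard : ∀ σ : P, r + 2 ≤ (σ : Finset V).card ∧ (σ : Finset V).card ≤ k + 1 := by
      intro σ
      have h1 := σ.2.1
      have h2 := hdim _ h1
      have h3 : ¬ _ := fun h => σ.2.2 (hS _ h1 h)
      rw [Finset.card_map] at h2 h3
      omega
    have hle : c.card ≤ (Finset.Icc (r + 2) (k + 1)).card := by
      refine Finset.card_le_card_of_injOn (fun σ => (σ : Finset V).card)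
        (fun σ _ => by simpa using hcard σ) ?_
      intro a ha b hb hab
      apply Subtype.ext
      rcases hc.2 a ha b hb with h | h
      · exact Finset.eq_of_subset_of_card_le h hab.ge
      · exact (Finset.eq_of_subset_of_card_le h hab.le).symm
    obtain ⟨σ, -⟩ := hc.1
    have := hcard σ
    rw [Nat.card_Icc] at hle
    omega
  · have hDK : ∀ s ∈ OC.absF V K.faces, ∀ t ⊆ s, t.Nonempty → t ∈ OC.absF V K.faces :=
      fun s hs t hts ht => K.down_closed hs (Finset.map_subset_map.2 hts) ht.map
    obtain ⟨e1⟩ := OC.real_homeo (P := P) hDK (OC.real_injOn K V) (fun t ht => ht.1)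
    obtain ⟨e2⟩ := OC.real_homeo (P := OC.Chains P) hD (OC.pt_real_inj.injOn) subset_rfl
    obtain ⟨e⟩ := OC.abs_equiv (P := P) h0
    have i1 := OC.real_image K V hV (K.faces \ S) sdiff_subset
    have i2 := OC.stdCx_space (OC.Chains P) hne hD
    exact ⟨((Homeomorph.setCongr i1.symm).trans e1.symm).toHomotopyEquiv.trans
      (e.trans (e2.trans (Homeomorph.setCongr i2.symm)).toHomotopyEquiv)⟩
end

section
/- Let B be a finite simplicial complex in some Euclidean space and let A be a nonempty subset of the set of simplices of B, each of dimension ≤ m. Let |A| denote the union of the open simplices int(σ) over all σ ∈ A. Then |A| is homotopy equivalent to a finite CW complex of dimension ≤ m. -/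
open Set Geometry

namespace UOS

open Classical in
/-- support of a weight function -/
noncomputable def supp {V : Type*} [Fintype V] (w : V → ℝ) : Finset V :=
  Finset.univ.filter (fun v => w v ≠ 0)

lemma mem_supp {V : Type*} [Fintype V] {w : V → ℝ} {v : V} : v ∈ supp w ↔ w v ≠ 0 := by
  simp [supp]

/-- the points of the standard simplex whose support is in a family -/
def K {V : Type*} [Fintype V] (A : Set (Finset V)) : Set (V → ℝ) :=
  {w | w ∈ stdSimplex ℝ V ∧ supp w ∈ A}

/-- nonempty chains in a family -/
def chains {V : Type*} (A : Set (Finset V)) : Set (Finset (Finset V)) :=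
  {c | c.Nonempty ∧ (∀ s ∈ c, s ∈ A) ∧ ∀ s ∈ c, ∀ t ∈ c, s ⊆ t ∨ t ⊆ s}

lemma supp_nonempty {V : Type*} [Fintype V] {w : V → ℝ} (hw : w ∈ stdSimplex ℝ V) :
    (supp w).Nonempty := by
  by_contra h
  rw [Finset.not_nonempty_iff_eq_empty] at h
  have : ∀ v, w v = 0 := by
    intro v
    by_contra hv
    have := mem_supp.2 hv
    simp [h] at this
  have h1 := hw.2
  simp [this] at h1

lemma pos_of_mem_supp {V : Type*} [Fintype V] {w : V → ℝ} (hw : w ∈ stdSimplex ℝ V) {v : V}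
    (hv : v ∈ supp w) : 0 < w v :=
  lt_of_le_of_ne (hw.1 v) (Ne.symm (mem_supp.1 hv))

lemma homotopic_of_segment {X F : Type*} [TopologicalSpace X] [AddCommGroup F] [Module ℝ F]
    [TopologicalSpace F] [IsTopologicalAddGroup F] [ContinuousSMul ℝ F]
    {Y : Set F} (f g : C(X, Y))
    (h : ∀ x, ∀ t : ℝ, 0 ≤ t → t ≤ 1 → (1 - t) • (f x : F) + t • (g x : F) ∈ Y) :
    ContinuousMap.Homotopic f g :=
  ⟨{ toFun := fun p => ⟨(1 - (p.1 : ℝ)) • (f p.2 : F) + (p.1 : ℝ) • (g p.2 : F),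
        h p.2 p.1 p.1.2.1 p.1.2.2⟩
     continuous_toFun := by fun_prop
     map_zero_left := fun x => by ext1; simp
     map_one_left := fun x => by ext1; simp }⟩

section comb
variable {V : Type*} [Fintype V] 

open Classical in
/-- unnormalised barycentric-subdivision coordinate -/
noncomputable def mu (w : V → ℝ) (s : Finset V) : ℝ :=
  (∏ v ∈ s, w v) * ∏ v ∈ s, ∏ u ∈ sᶜ, max 0 (w v - w u)

lemma mu_nonneg {w : V → ℝ} (hw : ∀ v, 0 ≤ w v) (s : Finset V) : 0 ≤ mu w s :=
  mul_nonneg (Finset.prod_nonneg fun v _ => hw v)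
    (Finset.prod_nonneg fun v _ => Finset.prod_nonneg fun u _ => le_max_left _ _)

lemma mu_ne_zero_iff {w : V → ℝ} (s : Finset V) :
    mu w s ≠ 0 ↔ (∀ v ∈ s, w v ≠ 0) ∧ ∀ v ∈ s, ∀ u, u ∉ s → w u < w v := by
  classical
  unfold mu
  rw [mul_ne_zero_iff, Finset.prod_ne_zero_iff, Finset.prod_ne_zero_iff]
  refine and_congr Iff.rfl (forall₂_congr fun v hv => ?_)
  rw [Finset.prod_ne_zero_iff]
  refine forall_congr' fun u => ?_
  rw [Finset.mem_compl]
  refine imp_congr Iff.rfl ?_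
  constructor
  · intro h
    by_contra hh
    exact h (max_eq_left (by linarith))
  · intro h
    have : max 0 (w v - w u) = w v - w u := max_eq_right (by linarith)
    rw [this]; linarith

lemma mu_subset_supp {w : V → ℝ} {s : Finset V} (h : mu w s ≠ 0) : s ⊆ supp w :=
  fun v hv => mem_supp.2 (((mu_ne_zero_iff s).1 h).1 v hv)

lemma mu_supp {w : V → ℝ} (hw : w ∈ stdSimplex ℝ V) : mu w (supp w) ≠ 0 := by
  rw [mu_ne_zero_iff]
  refine ⟨fun v hv => mem_supp.1 hv, fun v hv u hu => ?_⟩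
  have : w u = 0 := by
    by_contra h
    exact hu (mem_supp.2 h)
  rw [this]
  exact pos_of_mem_supp hw hv

lemma mu_chain {w : V → ℝ} {s t : Finset V} (hs : mu w s ≠ 0) (ht : mu w t ≠ 0) :
    s ⊆ t ∨ t ⊆ s := by
  by_contra h
  push Not at h
  obtain ⟨h1, h2⟩ := h
  obtain ⟨a, has, hat⟩ := Finset.not_subset.1 h1
  obtain ⟨b, hbt, hbs⟩ := Finset.not_subset.1 h2
  have := ((mu_ne_zero_iff s).1 hs).2 a has b hbs
  have := ((mu_ne_zero_iff t).1 ht).2 b hbt a hat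
  linarith

open Classical in
/-- unnormalised, restricted to the family -/
noncomputable def nu (A : Set (Finset V)) (w : V → ℝ) (s : Finset V) : ℝ :=
  if s ∈ A then mu w s else 0

lemma nu_ne_zero {A : Set (Finset V)} {w : V → ℝ} {s : Finset V} :
    nu A w s ≠ 0 ↔ s ∈ A ∧ mu w s ≠ 0 := by
  unfold nu; split_ifs with h <;> simp [h]

lemma nu_nonneg {A : Set (Finset V)} {w : V → ℝ} (hw : ∀ v, 0 ≤ w v) (s : Finset V) :
    0 ≤ nu A w s := by
  unfold nu; split_ifs
  · exact mu_nonneg hw s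
  · exact le_rfl

/-- the retraction -/
noncomputable def ff (A : Set (Finset V)) (w : V → ℝ) (s : Finset V) : ℝ :=
  nu A w s / ∑ t, nu A w t

lemma sum_nu_pos {A : Set (Finset V)} {w : V → ℝ} (hw : w ∈ K A) : 0 < ∑ t, nu A w t := by
  apply Finset.sum_pos' (fun s _ => nu_nonneg hw.1.1 s)
  exact ⟨supp w, Finset.mem_univ _, lt_of_le_of_ne (nu_nonneg hw.1.1 _)
    (Ne.symm (nu_ne_zero.2 ⟨hw.2, mu_supp hw.1⟩))⟩

lemma mem_supp_ff {A : Set (Finset V)} {w : V → ℝ} (hw : w ∈ K A) {s : Finset V} :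
    s ∈ supp (ff A w) ↔ s ∈ A ∧ mu w s ≠ 0 := by
  rw [mem_supp, ff, div_ne_zero_iff, nu_ne_zero]
  have := (sum_nu_pos hw).ne'
  tauto

lemma ff_mem {A : Set (Finset V)} {w : V → ℝ} (hw : w ∈ K A) : ff A w ∈ K (chains A) := by
  have h1 : ff A w ∈ stdSimplex ℝ (Finset V) := by
    refine ⟨fun s => div_nonneg (nu_nonneg hw.1.1 s) (sum_nu_pos hw).le, ?_⟩
    simp only [ff]
    rw [← Finset.sum_div, div_self (sum_nu_pos hw).ne']
  refine ⟨h1, supp_nonempty h1, fun s hs => ((mem_supp_ff hw).1 hs).1, fun s hs t ht => ?_⟩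
  exact mu_chain ((mem_supp_ff hw).1 hs).2 ((mem_supp_ff hw).1 ht).2

lemma continuous_ff (A : Set (Finset V)) : ContinuousOn (ff A) (K A) := by
  have hnu : ∀ s, Continuous (fun w => nu A w s) := by
    intro s
    unfold nu
    split_ifs
    · unfold mu; fun_prop
    · exact continuous_const
  rw [continuousOn_pi]
  intro s
  unfold ff
  exact ContinuousOn.div (hnu s).continuousOn
    (continuous_finsetSum _ fun t _ => hnu t).continuousOn fun w hw => (sum_nu_pos hw).ne'

open Classical in
/-- barycentre map -/
noncomputable def gg (y : Finset V → ℝ) (v : V) : ℝ :=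
  ∑ s, y s * (if v ∈ s then ((s.card : ℝ))⁻¹ else 0)

lemma continuous_gg : Continuous (gg (V := V)) := by
  unfold gg; fun_prop

lemma gg_term_nonneg {y : Finset V → ℝ} (hy : ∀ s, 0 ≤ y s) (v : V) (s : Finset V) :
    0 ≤ y s * (open Classical in if v ∈ s then ((s.card : ℝ))⁻¹ else 0) := by
  apply mul_nonneg (hy s)
  split_ifs
  · positivity
  · exact le_rfl

lemma mem_supp_gg {y : Finset V → ℝ} (hy : ∀ s, 0 ≤ y s) {v : V} :
    v ∈ supp (gg y) ↔ ∃ s ∈ supp y, v ∈ s := by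
  classical
  rw [mem_supp]
  unfold gg
  rw [Ne, Finset.sum_eq_zero_iff_of_nonneg (fun s _ => gg_term_nonneg hy v s)]
  push Not
  constructor
  · rintro ⟨s, _, h⟩
    rw [mul_ne_zero_iff] at h
    refine ⟨s, mem_supp.2 h.1, ?_⟩
    by_contra hv
    simp [hv] at h
  · rintro ⟨s, hs, hv⟩
    refine ⟨s, Finset.mem_univ _, mul_ne_zero (mem_supp.1 hs) ?_⟩
    rw [if_pos hv]
    have : 0 < s.card := Finset.card_pos.2 ⟨v, hv⟩
    positivity

lemma exists_top {A : Set (Finset V)} {y : Finset V → ℝ} (hy : y ∈ K (chains A)) :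
    ∃ s ∈ supp y, ∀ t ∈ supp y, t ⊆ s := by
  obtain ⟨s, hs, hm⟩ := Finset.exists_max_image (supp y) Finset.card hy.2.1
  refine ⟨s, hs, fun t ht => ?_⟩
  rcases hy.2.2.2 s hs t ht with h | h
  · exact (Finset.eq_of_subset_of_card_le h (hm t ht)).ge
  · exact h

lemma supp_gg_eq {y : Finset V → ℝ} (hy : ∀ s, 0 ≤ y s) {s : Finset V} (hs : s ∈ supp y)
    (h : ∀ t ∈ supp y, t ⊆ s) : supp (gg y) = s := by
  ext v
  rw [mem_supp_gg hy]
  exact ⟨fun ⟨t, ht, hv⟩ => h t ht hv, fun hv => ⟨s, hs, hv⟩⟩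

lemma gg_mem {A : Set (Finset V)} (hA : ∅ ∉ A) {y : Finset V → ℝ} (hy : y ∈ K (chains A)) :
    gg y ∈ K A := by
  classical
  obtain ⟨s, hs, hm⟩ := exists_top hy
  refine ⟨⟨fun v => Finset.sum_nonneg fun s _ => gg_term_nonneg hy.1.1 v s, ?_⟩, ?_⟩
  · unfold gg
    rw [Finset.sum_comm, ← hy.1.2]
    refine Finset.sum_congr rfl fun t _ => ?_
    rw [← Finset.mul_sum]
    by_cases ht : y t = 0
    · simp [ht]
    · have h1 : t ∈ A := hy.2.2.1 t (mem_supp.2 ht)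
      have h2 : t.card ≠ 0 := by
        intro h0
        rw [Finset.card_eq_zero] at h0
        exact hA (h0 ▸ h1)
      have h3 : (t.card : ℝ) ≠ 0 := by exact_mod_cast h2
      simp [h3]
  · rw [supp_gg_eq hy.1.1 hs hm]
    exact hy.2.2.1 s hs

lemma supp_gg_ff {A : Set (Finset V)} {w : V → ℝ} (hw : w ∈ K A) :
    supp (gg (ff A w)) = supp w :=
  supp_gg_eq (ff_mem hw).1.1 ((mem_supp_ff hw).2 ⟨hw.2, mu_supp hw.1⟩)
    fun _ ht => mu_subset_supp ((mem_supp_ff hw).1 ht).2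

lemma mem_of_mu_gg {A : Set (Finset V)} {y : Finset V → ℝ} (hy : y ∈ K (chains A))
    {s : Finset V} (hne : s.Nonempty) (h : mu (gg y) s ≠ 0) : s ∈ supp y := by
  classical
  obtain ⟨hpos, hlt⟩ := (mu_ne_zero_iff s).1 h
  obtain ⟨v, hv, hmin⟩ := Finset.exists_min_image s (gg y) hne
  obtain ⟨t0, ht0, hvt0⟩ := (mem_supp_gg hy.1.1).1 (mem_supp.2 (hpos v hv))
  obtain ⟨t, ht, htmin⟩ := Finset.exists_min_image ((supp y).filter (fun t => v ∈ t)) Finset.card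
    ⟨t0, Finset.mem_filter.2 ⟨ht0, hvt0⟩⟩
  obtain ⟨ht, hvt⟩ := Finset.mem_filter.1 ht
  have hsub : ∀ r ∈ supp y, v ∈ r → t ⊆ r := by
    intro r hr hvr
    rcases hy.2.2.2 t ht r hr with h | h
    · exact h
    · exact (Finset.eq_of_subset_of_card_le h (htmin r (Finset.mem_filter.2 ⟨hr, hvr⟩))).ge
  suffices s = t by rw [this]; exact ht
  ext u
  constructor
  · intro hu
    by_contra hut
    have : gg y u < gg y v := by
      unfold gg
      apply Finset.sum_lt_sum
      · intro r _
        by_cases hr : r ∈ supp y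
        · by_cases hur : u ∈ r
          · have : v ∈ r := by
              rcases hy.2.2.2 t ht r hr with h | h
              · exact h hvt
              · exact absurd (h hur) hut
            simp [hur, this]
          · rw [if_neg hur, mul_zero]
            exact gg_term_nonneg hy.1.1 v r
        · have : y r = 0 := by
            by_contra h0
            exact hr (mem_supp.2 h0)
          simp [this]
      · refine ⟨t, Finset.mem_univ _, ?_⟩
        rw [if_neg hut, if_pos hvt, mul_zero]
        have : 0 < t.card := Finset.card_pos.2 ⟨v, hvt⟩
        have := pos_of_mem_supp hy.1 ht
        positivity
    exact absurd (hmin u hu) (not_le.2 this)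
  · intro hu
    by_contra hus
    have h1 := hlt v hv u hus
    have : gg y v ≤ gg y u := by
      unfold gg
      apply Finset.sum_le_sum
      intro r _
      by_cases hr : r ∈ supp y
      · by_cases hvr : v ∈ r
        · have : u ∈ r := hsub r hr hvr hu
          simp [hvr, this]
        · rw [if_neg hvr, mul_zero]
          exact gg_term_nonneg hy.1.1 u r
      · have : y r = 0 := by
          by_contra h0
          exact hr (mem_supp.2 h0)
        simp [this]
    linarith

lemma supp_ff_gg {A : Set (Finset V)} (hA : ∅ ∉ A) {y : Finset V → ℝ} (hy : y ∈ K (chains A)) :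
    supp (ff A (gg y)) ⊆ supp y := by
  intro s hs
  obtain ⟨h1, h2⟩ := (mem_supp_ff (gg_mem hA hy)).1 hs
  refine mem_of_mu_gg hy (Finset.nonempty_iff_ne_empty.2 ?_) h2
  rintro rfl
  exact hA h1

lemma comb_mem {w w' : V → ℝ} (hw : w ∈ stdSimplex ℝ V) (hw' : w' ∈ stdSimplex ℝ V) {t : ℝ}
    (h0 : 0 ≤ t) (h1 : t ≤ 1) : (1 - t) • w + t • w' ∈ stdSimplex ℝ V :=
  convex_stdSimplex ℝ V hw hw' (by linarith) h0 (by ring)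

theorem equiv_chains (A : Set (Finset V)) (hA : ∅ ∉ A) :
    Nonempty (ContinuousMap.HomotopyEquiv (K A) (K (chains A))) := by
  let f : C(K A, K (chains A)) :=
    ⟨fun w => ⟨ff A w, ff_mem w.2⟩, by
      refine Continuous.subtype_mk ?_ _
      exact continuousOn_iff_continuous_restrict.1 (continuous_ff A)⟩
  let g : C(K (chains A), K A) :=
    ⟨fun w => ⟨gg w, gg_mem hA w.2⟩, by
      refine Continuous.subtype_mk ?_ _
      exact continuous_gg.comp continuous_subtype_val⟩
  refine ⟨⟨f, g, ?_, ?_⟩⟩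
  · refine homotopic_of_segment _ _ fun w t h0 h1 => ?_
    change (1 - t) • gg (ff A w) + t • (w : V → ℝ) ∈ K A
    have hg := gg_mem hA (ff_mem w.2)
    refine ⟨comb_mem hg.1 w.2.1 h0 h1, ?_⟩
    have : supp ((1 - t) • gg (ff A w) + t • (w : V → ℝ)) = supp (w : V → ℝ) := by
      have hs := supp_gg_ff w.2
      ext v
      have hv : v ∈ supp (gg (ff A w)) ↔ v ∈ supp (w : V → ℝ) := by rw [hs]
      by_cases hvw : v ∈ supp (w : V → ℝ)
      · have p1 := pos_of_mem_supp hg.1 (hv.2 hvw)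
        have p2 := pos_of_mem_supp w.2.1 hvw
        refine ⟨fun _ => hvw, fun _ => mem_supp.2 ?_⟩
        simp only [Pi.add_apply, Pi.smul_apply, smul_eq_mul]
        rcases h0.eq_or_lt with rfl | h0
        · simpa using p1.ne'
        · have := mul_pos h0 p2
          have := mul_nonneg (sub_nonneg.2 h1) p1.le
          linarith
      · have h3 := mt hv.1 hvw
        rw [mem_supp, not_not] at h3
        have h4 := hvw
        rw [mem_supp, not_not] at h4
        simp [mem_supp, h3, h4]
    rw [this]
    exact w.2.2
  · refine homotopic_of_segment _ _ fun y t h0 h1 => ?_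
    change (1 - t) • ff A (gg y) + t • (y : Finset V → ℝ) ∈ K (chains A)
    have hf := ff_mem (gg_mem hA y.2)
    have hm := comb_mem hf.1 y.2.1 h0 h1
    have : supp ((1 - t) • ff A (gg y) + t • (y : Finset V → ℝ)) ⊆ supp (y : Finset V → ℝ) := by
      intro s hs
      by_contra h4
      have h3 := mt (fun h => supp_ff_gg hA y.2 h) h4
      rw [mem_supp, not_not] at h3 h4
      simp [mem_supp, h3, h4] at hs
    exact ⟨hm, supp_nonempty hm, fun s hs => y.2.2.2.1 s (this hs),
      fun s hs t ht => y.2.2.2.2 s (this hs) t (this ht)⟩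

end comb

section geom
variable {E : Type*} [NormedAddCommGroup E] [NormedSpace ℝ E]

lemma exists_coords [FiniteDimensional ℝ E] (s : Finset E)
    (hs : AffineIndependent ℝ ((↑) : s → E)) :
    ∃ c : E → (E →ᵃ[ℝ] ℝ), (∀ v, Continuous (c v)) ∧
      (∀ v ∈ s, c v v = 1) ∧ ∀ v ∈ s, ∀ u ∈ s, u ≠ v → c v u = 0 := by
  classical
  obtain ⟨t, hst, hti, htop⟩ := exists_subset_affineIndependent_affineSpan_eq_top
    (k := ℝ) (s := (s : Set E)) hs
  let b : AffineBasis t ℝ E := ⟨((↑) : t → E), hti, by simpa using htop⟩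
  refine ⟨fun v => if h : v ∈ t then b.coord ⟨v, h⟩ else AffineMap.const ℝ E 0, ?_, ?_, ?_⟩
  · intro v
    exact AffineMap.continuous_of_finiteDimensional _
  · intro v hv
    have hvt : v ∈ t := hst hv
    have := b.coord_apply ⟨v, hvt⟩ ⟨v, hvt⟩
    simp only [if_true] at this
    simp only [hvt, dif_pos]
    exact this
  · intro v hv u hu huv
    have hvt : v ∈ t := hst hv
    have hut : u ∈ t := hst hu
    have := b.coord_apply ⟨v, hvt⟩ ⟨u, hut⟩
    rw [if_neg (by simpa using huv.symm)] at this
    simp only [hvt, dif_pos]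
    exact this

lemma coord_comb {s : Finset E} {c : E → (E →ᵃ[ℝ] ℝ)}
    (h1 : ∀ v ∈ s, c v v = 1) (h0 : ∀ v ∈ s, ∀ u ∈ s, u ≠ v → c v u = 0)
    {w : E → ℝ} (hw : ∑ v ∈ s, w v = 1) {v : E} (hv : v ∈ s) :
    c v (∑ u ∈ s, w u • u) = w v := by
  have e1 := Finset.affineCombination_eq_linear_combination s (id : E → E) w hw
  simp only [id] at e1
  rw [← e1, Finset.map_affineCombination _ _ _ hw,
    Finset.affineCombination_eq_linear_combination _ _ _ hw]
  rw [Finset.sum_eq_single_of_mem v hv]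
  · simp [h1 v hv]
  · intro u hu huv
    simp [h0 v hv u hu huv]

lemma mem_intInt [FiniteDimensional ℝ E] (s : Finset E)
    (hs : AffineIndependent ℝ ((↑) : s → E)) (x : E) :
    x ∈ intrinsicInterior ℝ (convexHull ℝ (s : Set E)) ↔
      ∃ w : E → ℝ, (∀ v ∈ s, 0 < w v) ∧ ∑ v ∈ s, w v = 1 ∧ ∑ v ∈ s, w v • v = x := by
  obtain ⟨c, hc, h1, h0⟩ := exists_coords s hs
  constructor
  · intro hx
    obtain ⟨w, hw0, hw1, hwx⟩ := Finset.mem_convexHull'.1 (intrinsicInterior_subset hx)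
    refine ⟨w, fun v hv => lt_of_le_of_ne (hw0 v hv) fun hwv => ?_, hw1, hwx⟩
    obtain ⟨y, hy, hyx⟩ := mem_intrinsicInterior.1 hx
    have hvm : v ∈ affineSpan ℝ (convexHull ℝ (s : Set E)) :=
      subset_affineSpan _ _ (subset_convexHull _ _ hv)
    let γ : ℝ → affineSpan ℝ (convexHull ℝ (s : Set E)) := fun t =>
      ⟨AffineMap.lineMap x v t, AffineMap.lineMap_mem t (hyx ▸ y.2) hvm⟩
    have hγ : Continuous γ := Continuous.subtype_mk (by
      exact AffineMap.lineMap_continuous) _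
    have hγ0 : γ 0 = y := by
      ext1; simp [γ, hyx]
    have hnear : ∀ᶠ t in nhds (0 : ℝ), γ t ∈
        interior (Subtype.val ⁻¹' (convexHull ℝ (s : Set E)) :
          Set (affineSpan ℝ (convexHull ℝ (s : Set E)))) :=
      hγ.continuousAt.eventually_mem (by rw [hγ0]; exact isOpen_interior.mem_nhds hy)
    obtain ⟨ε, hε, hball⟩ := Metric.eventually_nhds_iff.1 hnear
    have hm := interior_subset (hball (y := -(ε / 2)) (by
      rw [Real.dist_eq, sub_zero, abs_neg, abs_of_pos] <;> linarith))
    obtain ⟨w', hw0', hw1', hwx'⟩ := Finset.mem_convexHull'.1 hm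
    have e1 : c v (AffineMap.lineMap x v (-(ε / 2))) = w' v := by
      have := coord_comb h1 h0 hw1' hv
      rw [hwx'] at this
      exact this
    have e2 : c v x = 0 := by
      rw [← hwx, coord_comb h1 h0 hw1 hv, hwv]
    rw [AffineMap.apply_lineMap, e2, h1 v hv, AffineMap.lineMap_apply_module] at e1
    have := hw0' v hv
    simp at e1
    linarith
  · rintro ⟨w, hw0, hw1, hwx⟩
    have hxm : x ∈ convexHull ℝ (s : Set E) :=
      Finset.mem_convexHull'.2 ⟨w, fun v hv => (hw0 v hv).le, hw1, hwx⟩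
    refine mem_intrinsicInterior.2 ⟨⟨x, subset_affineSpan _ _ hxm⟩, ?_, rfl⟩
    rw [mem_interior]
    refine ⟨{z | ∀ v ∈ s, 0 < c v z}, ?_, ?_, ?_⟩
    · rintro ⟨z, hz⟩ hzc
      rw [affineSpan_convexHull] at hz
      have hz' : z ∈ affineSpan ℝ ((id : E → E) '' (s : Set E)) := by simpa using hz
      obtain ⟨fs, u, hfs, hu1, hzu⟩ := eq_affineCombination_of_mem_affineSpan_image hz'
      classical
      rw [Finset.affineCombination_eq_linear_combination _ _ _ hu1] at hzu
      have hfs' : fs ⊆ s := by exact_mod_cast hfs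
      let u' : E → ℝ := fun v => if v ∈ fs then u v else 0
      have e1 : ∑ v ∈ s, u' v = 1 := by
        rw [← hu1, ← Finset.sum_subset hfs' (f := u')]
        · exact Finset.sum_congr rfl fun v hv => by simp [u', hv]
        · intro v _ hv; simp [u', hv]
      have e2 : ∑ v ∈ s, u' v • v = z := by
        rw [hzu, ← Finset.sum_subset hfs' (f := fun v => u' v • v)]
        · exact Finset.sum_congr rfl fun v hv => by simp [u', hv]
        · intro v _ hv; simp [u', hv]
      refine Finset.mem_convexHull'.2 ⟨u', fun v hv => ?_, e1, e2⟩
      have : 0 < c v z := hzc v hv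
      rw [← e2, coord_comb h1 h0 e1 hv] at this
      exact this.le
    · have : {z : affineSpan ℝ (convexHull ℝ (s : Set E)) | ∀ v ∈ s, 0 < c v z} =
          ⋂ v ∈ s, {z : affineSpan ℝ (convexHull ℝ (s : Set E)) | 0 < c v z} := by
        ext; simp
      rw [this]
      exact isOpen_biInter_finset fun v _ =>
        isOpen_lt continuous_const ((hc v).comp continuous_subtype_val)
    · intro v hv
      change 0 < c v x
      rw [← hwx, coord_comb h1 h0 hw1 hv]
      exact hw0 v hv

variable {V : Type*} [Fintype V] (p : V ↪ E)

/-- the linear realisation map -/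
def T (w : V → ℝ) : E := ∑ v, w v • p v

lemma continuous_T : Continuous (T p) := by
  unfold T; fun_prop

lemma sum_supp {F : Type*} [AddCommMonoid F] {w : V → ℝ} {s : Finset V} (h : supp w ⊆ s)
    (f : V → F) (hf : ∀ v, w v = 0 → f v = 0) : ∑ v, f v = ∑ v ∈ s, f v := by
  symm
  apply Finset.sum_subset (Finset.subset_univ _)
  intro v _ hv
  apply hf
  by_contra h'
  exact hv (h (mem_supp.2 h'))

/-- correspondence between weights on `E` and weights on `V` -/
lemma exists_weights {s : Finset V} {w : E → ℝ} (h0 : ∀ y ∈ s.map p, 0 ≤ w y)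
    (h1 : ∑ y ∈ s.map p, w y = 1) :
    ∃ u ∈ stdSimplex ℝ V, supp u ⊆ s ∧ T p u = ∑ y ∈ s.map p, w y • y ∧
      ∀ v ∈ s, u v = w (p v) := by
  classical
  let u : V → ℝ := fun v => if v ∈ s then w (p v) else 0
  have hu : supp u ⊆ s := by
    intro v hv
    by_contra h
    exact mem_supp.1 hv (by simp [u, h])
  refine ⟨u, ⟨fun v => ?_, ?_⟩, hu, ?_, fun v hv => by simp [u, hv]⟩
  · by_cases hv : v ∈ s
    · simpa [u, hv] using h0 _ (Finset.mem_map_of_mem p hv)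
    · simp [u, hv]
  · rw [sum_supp hu u (fun v h => h), ← h1, Finset.sum_map]
    exact Finset.sum_congr rfl fun v hv => by simp [u, hv]
  · unfold T
    rw [sum_supp hu _ (fun v h => by simp [h]), Finset.sum_map]
    exact Finset.sum_congr rfl fun v hv => by simp [u, hv]

lemma weights_push {s : Finset V} {u : V → ℝ} (hu : u ∈ stdSimplex ℝ V) (hs : supp u ⊆ s) :
    ∃ w : E → ℝ, (∀ v, w (p v) = u v) ∧ ∑ y ∈ s.map p, w y = 1 ∧
      ∑ y ∈ s.map p, w y • y = T p u := by
  refine ⟨Function.extend p u 0, fun v => p.injective.extend_apply _ _ _, ?_, ?_⟩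
  · rw [Finset.sum_map, ← hu.2, sum_supp hs u (fun v h => h)]
    exact Finset.sum_congr rfl fun v _ => p.injective.extend_apply _ _ _
  · unfold T
    rw [Finset.sum_map, sum_supp hs _ (fun v h => by simp [h])]
    exact Finset.sum_congr rfl fun v _ => by rw [p.injective.extend_apply]

lemma mem_hull {s : Finset V} {x : E} :
    x ∈ convexHull ℝ ((s.map p : Finset E) : Set E) ↔
      ∃ u ∈ stdSimplex ℝ V, supp u ⊆ s ∧ T p u = x := by
  rw [Finset.mem_convexHull']
  constructor
  · rintro ⟨w, h0, h1, hx⟩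
    obtain ⟨u, hu, hs, hT, _⟩ := exists_weights p h0 h1
    exact ⟨u, hu, hs, hT.trans hx⟩
  · rintro ⟨u, hu, hs, rfl⟩
    obtain ⟨w, hw, h1, h2⟩ := weights_push p hu hs
    refine ⟨w, fun y hy => ?_, h1, h2⟩
    obtain ⟨v, _, rfl⟩ := Finset.mem_map.1 hy
    rw [hw]
    exact hu.1 v

lemma mem_int [FiniteDimensional ℝ E] {s : Finset V}
    (hs : AffineIndependent ℝ ((↑) : {x // x ∈ s.map p} → E)) {x : E} :
    x ∈ intrinsicInterior ℝ (convexHull ℝ ((s.map p : Finset E) : Set E)) ↔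
      ∃ u ∈ stdSimplex ℝ V, supp u = s ∧ T p u = x := by
  rw [mem_intInt _ hs]
  constructor
  · rintro ⟨w, h0, h1, hx⟩
    obtain ⟨u, hu, hs, hT, hw⟩ := exists_weights p (fun y hy => (h0 y hy).le) h1
    refine ⟨u, hu, hs.antisymm fun v hv => mem_supp.2 ?_, hT.trans hx⟩
    rw [hw v hv]
    exact (h0 _ (Finset.mem_map_of_mem p hv)).ne'
  · rintro ⟨u, hu, hs, rfl⟩
    obtain ⟨w, hw, h1, h2⟩ := weights_push p hu hs.subset
    refine ⟨w, fun y hy => ?_, h1, h2⟩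
    obtain ⟨v, hv, rfl⟩ := Finset.mem_map.1 hy
    rw [hw]
    exact pos_of_mem_supp hu (hs ▸ hv)

lemma T_unique {s : Finset V}
    (hs : AffineIndependent ℝ ((↑) : {x // x ∈ s.map p} → E)) {w u : V → ℝ}
    (hw : w ∈ stdSimplex ℝ V) (hu : u ∈ stdSimplex ℝ V) (hws : supp w ⊆ s) (hus : supp u ⊆ s)
    (h : T p w = T p u) : w = u := by
  let e : s ↪ {x // x ∈ s.map p} :=
    ⟨fun v => ⟨p v, Finset.mem_map_of_mem p v.2⟩, fun a b hab => by
      ext1; exact p.injective (by simpa using hab)⟩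
  have hi := affineIndependent_iff.1 (hs.comp_embedding e) Finset.univ (fun v => w v - u v)
    (by
      rw [Finset.sum_sub_distrib, Finset.sum_coe_sort s w, Finset.sum_coe_sort s u,
        ← sum_supp hws w (fun v h => h), ← sum_supp hus u (fun v h => h), hw.2, hu.2, sub_self])
    (by
      have h1 : ∀ v : s, (((↑) : {x // x ∈ s.map p} → E) ∘ e) v = p v := fun v => rfl
      simp only [h1, sub_smul]
      rw [Finset.sum_sub_distrib, Finset.sum_coe_sort s (fun v => w v • p v),
        Finset.sum_coe_sort s (fun v => u v • p v),
        ← sum_supp hws (fun v => w v • p v) (fun v h => by simp [h]),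
        ← sum_supp hus (fun v => u v • p v) (fun v h => by simp [h])]
      exact sub_eq_zero.2 h)
  ext v
  by_cases hv : v ∈ s
  · exact sub_eq_zero.1 (hi ⟨v, hv⟩ (Finset.mem_univ _))
  · have h1 := mt (fun h => hws h) hv
    have h2 := mt (fun h => hus h) hv
    rw [mem_supp, not_not] at h1 h2
    rw [h1, h2]

/-- abstract faces -/
def absFaces (B : SimplicialComplex ℝ E) : Set (Finset V) := {s | s.map p ∈ B.faces}

lemma T_injOn (B : SimplicialComplex ℝ E) : InjOn (T p) (K (absFaces p B)) := by
  classical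
  intro w hw u hu h
  have hx : T p w ∈ convexHull ℝ (((supp w ∩ supp u).map p : Finset E) : Set E) := by
    rw [Finset.map_inter, Finset.coe_inter]
    refine B.inter_subset_convexHull hw.2 hu.2 ⟨(mem_hull p).2 ⟨w, hw.1, subset_rfl, rfl⟩,
      (mem_hull p).2 ⟨u, hu.1, subset_rfl, h.symm⟩⟩
  obtain ⟨z, hz, hzs, hT⟩ := (mem_hull p).1 hx
  have e1 := T_unique p (B.indep hw.2) hw.1 hz subset_rfl
    (hzs.trans Finset.inter_subset_left) hT.symm
  have e2 := T_unique p (B.indep hu.2) hu.1 hz subset_rfl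
    (hzs.trans Finset.inter_subset_right) (h.symm.trans hT.symm)
  rw [e1, e2]

lemma isCompact_K (B : SimplicialComplex ℝ E) :
    IsCompact (K (absFaces p B)) := by
  have : K (absFaces p B) = stdSimplex ℝ V ∩
      ⋃ s ∈ absFaces p B, ⋂ v ∈ {v : V | v ∉ s}, {w : V → ℝ | w v = 0} := by
    ext w
    simp only [K, mem_inter_iff, mem_iUnion, mem_iInter, mem_ofPred_eq]
    refine and_congr_right fun hw => ?_
    constructor
    · intro h
      refine ⟨supp w, h, fun v hv => ?_⟩
      by_contra h'
      exact hv (mem_supp.2 h')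
    · rintro ⟨s, hs, h⟩
      refine B.down_closed hs (Finset.map_subset_map.2 fun v hv => ?_)
        ((supp_nonempty hw).map)
      by_contra h'
      exact mem_supp.1 hv (h v h')
  rw [this]
  refine (isCompact_stdSimplex ℝ V).inter_right ?_
  refine Set.Finite.isClosed_biUnion (Set.toFinite _) fun s _ => ?_
  exact isClosed_biInter fun v _ => isClosed_eq (continuous_apply v) continuous_const

lemma homeo_image (B : SimplicialComplex ℝ E) {A : Set (Finset V)} (hA : A ⊆ absFaces p B) :
    Nonempty (K A ≃ₜ (T p '' K A)) := by
  have hcomp : CompactSpace (K (absFaces p B)) := isCompact_iff_compactSpace.1 (isCompact_K p B)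
  have hsub : K A ⊆ K (absFaces p B) := fun w hw => ⟨hw.1, hA hw.2⟩
  have hemb : Topology.IsEmbedding (fun w : K (absFaces p B) => T p w) :=
    (Continuous.isClosedEmbedding ((continuous_T p).comp continuous_subtype_val)
      (fun a b h => Subtype.ext (T_injOn p B a.2 b.2 h))).isEmbedding
  have hemb2 : Topology.IsEmbedding (fun w : K A => T p w) :=
    hemb.comp (Topology.IsEmbedding.inclusion hsub)
  have hr : range (fun w : K A => T p w) = T p '' K A := by
    ext x; simp
  exact ⟨hemb2.toHomeomorph.trans (Homeomorph.setCongr hr)⟩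

lemma image_space (B : SimplicialComplex ℝ E) (hcov : ∀ s ∈ B.faces, ∃ t : Finset V, t.map p = s) :
    T p '' K (absFaces p B) = B.space := by
  ext x
  rw [SimplicialComplex.mem_space_iff]
  constructor
  · rintro ⟨w, hw, rfl⟩
    exact ⟨_, hw.2, (mem_hull p).2 ⟨w, hw.1, subset_rfl, rfl⟩⟩
  · rintro ⟨s, hs, hx⟩
    obtain ⟨t, rfl⟩ := hcov s hs
    obtain ⟨u, hu, hus, rfl⟩ := (mem_hull p).1 hx
    exact ⟨u, ⟨hu, B.down_closed hs (Finset.map_subset_map.2 hus) (supp_nonempty hu).map⟩, rfl⟩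

lemma image_int [FiniteDimensional ℝ E] (B : SimplicialComplex ℝ E)
    (hcov : ∀ s ∈ B.faces, ∃ t : Finset V, t.map p = s)
    (A : Set (Finset E)) (hA : A ⊆ B.faces) :
    T p '' K {s : Finset V | s.map p ∈ A} =
      ⋃ s ∈ A, intrinsicInterior ℝ (convexHull ℝ (s : Set E)) := by
  ext x
  simp only [mem_iUnion, exists_prop]
  constructor
  · rintro ⟨w, hw, rfl⟩
    exact ⟨_, hw.2, (mem_int p (B.indep (hA hw.2))).2 ⟨w, hw.1, rfl, rfl⟩⟩
  · rintro ⟨s, hs, hx⟩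
    obtain ⟨t, rfl⟩ := hcov s (hA hs)
    obtain ⟨u, hu, rfl, rfl⟩ := (mem_int p (B.indep (hA hs))).1 hx
    exact ⟨u, ⟨hu, hs⟩, rfl⟩

end geom

lemma chains_card {V : Type*} {A : Set (Finset V)} {m : ℕ} (hA : ∅ ∉ A)
    (hm : ∀ s ∈ A, s.card ≤ m + 1) {c : Finset (Finset V)} (hc : c ∈ chains A) :
    c.card ≤ m + 1 := by
  have : c.card ≤ (Finset.Icc 1 (m + 1)).card := by
    apply Finset.card_le_card_of_injOn Finset.card
    · intro s hs
      have h1 := hc.2.1 s hs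
      refine Finset.mem_coe.2 (Finset.mem_Icc.2 ⟨Finset.card_pos.2 ?_, hm s h1⟩)
      rw [Finset.nonempty_iff_ne_empty]
      rintro rfl
      exact hA h1
    · intro s hs t ht hst
      rcases hc.2.2 s hs t ht with h | h
      · exact Finset.eq_of_subset_of_card_le h (le_of_eq hst.symm)
      · exact (Finset.eq_of_subset_of_card_le h (le_of_eq hst)).symm
  simpa using this

/-- basis vectors -/
noncomputable def basisEmb (W : Type*) [Fintype W] :
    W ↪ EuclideanSpace ℝ (Fin (Fintype.card W)) :=
  (Fintype.equivFin W).toEmbedding.trans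
    ⟨fun i => EuclideanSpace.basisFun (Fin (Fintype.card W)) ℝ i,
      (EuclideanSpace.basisFun (Fin (Fintype.card W)) ℝ).toBasis.injective⟩

lemma basisEmb_indep (W : Type*) [Fintype W] :
    AffineIndependent ℝ (basisEmb W) := by
  have h := (EuclideanSpace.basisFun (Fin (Fintype.card W)) ℝ).toBasis.linearIndependent
  have h2 := h.affineIndependent.comp_embedding (Fintype.equivFin W).toEmbedding
  have e : (basisEmb W : W → EuclideanSpace ℝ (Fin (Fintype.card W))) =
      (EuclideanSpace.basisFun (Fin (Fintype.card W)) ℝ).toBasis ∘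
        (Fintype.equivFin W).toEmbedding := by
    funext v
    simp [basisEmb]
  rw [e]
  exact h2

open Classical in
/-- geometric order complex -/
noncomputable def orderComplex {V : Type*} [Fintype V] (A : Set (Finset V)) :
    SimplicialComplex ℝ (EuclideanSpace ℝ (Fin (Fintype.card (Finset V)))) :=
  SimplicialComplex.ofAffineIndependent
    { faces := {s | ∃ c ∈ chains A, c.map (basisEmb (Finset V)) = s}
      isRelLowerSet_faces := by
        rintro _ ⟨c, hc, rfl⟩
        refine ⟨hc.1.map, fun t ht htne => ?_⟩
        obtain ⟨d, hd, rfl⟩ := Finset.subset_map_iff.1 ht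
        exact ⟨d, ⟨Finset.map_nonempty.1 htne, fun s hs => hc.2.1 s (hd hs),
          fun s hs t ht => hc.2.2 s (hd hs) t (hd ht)⟩, rfl⟩ }
    ((basisEmb_indep (Finset V)).range.mono fun x hx => by
      simp only [mem_iUnion] at hx
      obtain ⟨_, ⟨c, _, rfl⟩, hx⟩ := hx
      obtain ⟨v, _, rfl⟩ := Finset.mem_map.1 hx
      exact ⟨v, rfl⟩)

lemma orderComplex_faces {V : Type*} [Fintype V] (A : Set (Finset V)) :
    (orderComplex A).faces = {s | ∃ c ∈ chains A, c.map (basisEmb (Finset V)) = s} := rfl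

end UOS

/-- Let `B` be a finite simplicial complex and `A` a nonempty set of simplices of `B`,
each of dimension `≤ m`.  Then the union `|A|` of the corresponding open simplices is
homotopy equivalent to a finite (simplicial, hence CW) complex of dimension `≤ m`. -/
theorem union_open_simplices_homotopy_type
    {N m : ℕ} (B : SimplicialComplex ℝ (EuclideanSpace ℝ (Fin N)))
    (hfin : B.faces.Finite)
    (A : Set (Finset (EuclideanSpace ℝ (Fin N))))
    (hAB : A ⊆ B.faces) (hAne : A.Nonempty)
    (hdim : ∀ s ∈ A, s.card ≤ m + 1) :
    ∃ (N' : ℕ) (L : SimplicialComplex ℝ (EuclideanSpace ℝ (Fin N'))),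
      L.faces.Finite ∧
      (∀ t ∈ L.faces, t.card ≤ m + 1) ∧
      Nonempty (ContinuousMap.HomotopyEquiv
        (⋃ s ∈ A,
          intrinsicInterior ℝ (convexHull ℝ (s : Set (EuclideanSpace ℝ (Fin N)))) :
          Set (EuclideanSpace ℝ (Fin N)))
        L.space) := by
  classical
  let vs : Finset (EuclideanSpace ℝ (Fin N)) := hfin.toFinset.biUnion id
  let p : vs ↪ EuclideanSpace ℝ (Fin N) := Function.Embedding.subtype _
  have hcov : ∀ s ∈ B.faces, ∃ t : Finset vs, t.map p = s := by
    intro s hs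
    refine ⟨s.subtype (· ∈ vs), Finset.subtype_map_of_mem fun x hx => ?_⟩
    exact Finset.mem_biUnion.2 ⟨s, hfin.mem_toFinset.2 hs, hx⟩
  let A' : Set (Finset vs) := {s | s.map p ∈ A}
  have hA' : ∅ ∉ A' := by
    intro h
    have h1 := B.nonempty_of_mem_faces (hAB h)
    simp at h1
  obtain ⟨e⟩ := UOS.equiv_chains A' hA'
  obtain ⟨h1⟩ := UOS.homeo_image p B (A := A') (fun s hs => hAB hs)
  rw [UOS.image_int p B hcov A hAB] at h1
  let q := UOS.basisEmb (Finset vs)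
  have hab : UOS.absFaces q (UOS.orderComplex A') = UOS.chains A' := by
    ext c
    simp only [UOS.absFaces, UOS.orderComplex_faces, mem_ofPred_eq]
    constructor
    · rintro ⟨d, hd, h⟩
      rwa [← Finset.map_injective q h]
    · intro h
      exact ⟨c, h, rfl⟩
  obtain ⟨h2⟩ := UOS.homeo_image q (UOS.orderComplex A') (A := UOS.chains A') hab.ge
  have himg := UOS.image_space q (UOS.orderComplex A') (by
    rintro _ ⟨c, _, rfl⟩
    exact ⟨c, rfl⟩)
  rw [hab] at himg
  rw [himg] at h2
  refine ⟨_, UOS.orderComplex A', ?_, ?_, ⟨?_⟩⟩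
  · rw [UOS.orderComplex_faces]
    exact (Set.toFinite (UOS.chains A')).image (fun c => c.map (UOS.basisEmb (Finset vs)))
  · rintro _ ⟨c, hc, rfl⟩
    rw [Finset.card_map]
    refine UOS.chains_card hA' (fun s hs => ?_) hc
    rw [← Finset.card_map p]
    exact hdim _ hs
  · exact (h1.symm.toHomotopyEquiv.trans e).trans h2.toHomotopyEquiv
end
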